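/- arXiv:1811.07843 — 3 statements merged into one kernel-verified Lean document; each statement's English description precedes it below -/
import Mathlib

section
/- C¹ regularity of the Euclidean-model unstable graph: In the setting of the Euclidean-model unstable manifold theorem — p, q ≥ 1; λ > 1, 0 ≤ κ < 1; A: ℝᵖ → ℝᵖ invertible linear with ‖A⁻¹‖ ≤ λ⁻¹; B: ℝ^q → ℝ^q linear with ‖B‖ ≤ κ; ρ: ℝ → (0,∞) monotonically decreasing with ρ(t) → 0 as t → ∞; f(t,u,s) = (t−1, A u + g₁(t,u,s), B s + g₂(t,u,s)) — assume in addition that g = (g₁,g₂) is continuously differentiable with ‖Dg(t,v)‖ ≤ C̃·ρ(t) for all (t,v), where Dg is the total derivative in all variables. Then t₁ can be chosen so that the unique invariant graph map σ: (t₁,∞) × ℝᵖ → ℝ^q (with ‖σ(t,u)‖ ≤ C·ρ(t), weighted spatial Lipschitz constant ≤ C·ρ(t), and f-invariant graph) is continuously differentiable, and its partial derivatives satisfy ‖∂ₜσ(t,u)‖ ≤ C·ρ(t) and ‖∂ᵤσ(t,u)‖ ≤ C·ρ(t) for all t > t₁ and u ∈ ℝᵖ (after possibly enlarging C). -/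
/-!
The method is that of Lyapunov and Perron. A point belongs to the unstable graph iff it has a
bounded backward orbit. Solving the expanding component of such an orbit `(aₙ, bₙ)` starting at
`(t, u)` for its later terms gives the fixed point equation

`a₀ = u`, `aₙ₊₁ = A⁻¹ (aₙ - g₁ (t + n + 1, aₙ₊₁, bₙ₊₁))`,
`bₙ = B bₙ₊₁ + g₂ (t + n + 1, aₙ₊₁, bₙ₊₁)`

on bounded sequences, whose right hand side is a contraction at late times `t`. It is also a `C¹`
operator: since `Dg` tends to zero along the orbit, uniformly in its states, the derivatives of the
individual terms form an equicontinuous family, and so they assemble to a continuous derivative in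
the supremum norm. By the implicit function theorem the fixed point, and in particular
`σ (t, u) = b₀`, is `C¹` in `(t, u)`. Estimating the equation for `b` gives
`‖b‖ ≤ (1 - ‖B‖)⁻¹ ‖g₂‖`, and likewise for differences of solutions, hence the decay of `σ` and of
its derivatives.
-/

open BoundedContinuousFunction Filter Function Set
open scoped Topology ContDiff

section Calculus

theorem equicontinuousAt_of_tendsto_cofinite {ι X Y : Type*} [TopologicalSpace X] [UniformSpace Y]
    {F : ι → X → Y} {x : X} {y : Y} (hF : ∀ i, ContinuousAt (F i) x)
    (hlim : Tendsto ↿F (cofinite ×ˢ 𝓝 x) (𝓝 y)) : EquicontinuousAt F x := by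
  intro U hU
  obtain ⟨V, hV, hVsymm, hVU⟩ := comp_symm_mem_uniformity_sets hU
  obtain ⟨P, hP, Q, hQ, hPQ⟩ := eventually_prod_iff.1 (hlim (mem_nhds_left y hV))
  have hfin : ∀ᶠ x' in 𝓝 x, ∀ i ∈ {i | ¬P i}, (F i x, F i x') ∈ U :=
    (Set.Finite.eventually_all hP).2 fun i _ => hF i (mem_nhds_left _ hU)
  filter_upwards [hfin, hQ] with x' hfin hQx' i
  by_cases hi : P i
  · exact hVU ⟨y, hVsymm.symm _ _ (hPQ hi hQ.self_of_nhds), hPQ hi hQx'⟩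
  · exact hfin i hi

variable {α X G : Type*} [TopologicalSpace α] [NormedAddCommGroup X] [NormedSpace ℝ X]
  [NormedAddCommGroup G] [NormedSpace ℝ G]

theorem continuousAt_bcf_iff_equicontinuousAt {Y β : Type*} [TopologicalSpace Y]
    [PseudoMetricSpace β] {Ψ : Y → α →ᵇ β} {x : Y} :
    ContinuousAt Ψ x ↔ EquicontinuousAt (fun i y => Ψ y i) x :=
  isInducing_coeFn.continuousAt_iff.trans equicontinuousAt_iff_continuousAt.symm

/-- A bounded family of operators `X → G`, regarded as one operator from `X` to bounded
families in `G`. -/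
noncomputable def bcfFlip : (α →ᵇ (X →L[ℝ] G)) →L[ℝ] X →L[ℝ] (α →ᵇ G) :=
  LinearMap.mkContinuous₂
    (LinearMap.mk₂ ℝ (fun L h => (ContinuousLinearMap.apply ℝ G h).compLeftContinuousBounded α L)
      (fun _ _ _ => by ext; simp) (fun _ _ _ => by ext; simp)
      (fun _ _ _ => by ext; simp) (fun _ _ _ => by ext; simp))
    1 fun L h => by
      rw [one_mul]
      exact (norm_le (by positivity)).2 fun i => (L i).le_of_opNorm_le (L.norm_coe_le_norm i) h

theorem hasFDerivAt_bcf {Ψ : X → α →ᵇ G} {Ψ' : X → α →ᵇ (X →L[ℝ] G)} {x : X}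
    (hΨ : ∀ i y, HasFDerivAt (fun z => Ψ z i) (Ψ' y i) y) (hΨ' : ContinuousAt Ψ' x) :
    HasFDerivAt Ψ (bcfFlip (Ψ' x)) x := by
  rw [hasFDerivAt_iff_isLittleO, Asymptotics.isLittleO_iff]
  intro ε hε
  obtain ⟨δ, hδ, hball⟩ := Metric.eventually_nhds_iff_ball.1 (Metric.tendsto_nhds.1 hΨ' ε hε)
  filter_upwards [Metric.ball_mem_nhds x hδ] with y hy
  refine (norm_le (by positivity)).2 fun i => ?_
  refine (convex_ball x δ).norm_image_sub_le_of_norm_hasFDerivWithin_le'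
    (fun z _ => (hΨ i z).hasFDerivWithinAt) (fun z hz => ?_) (Metric.mem_ball_self hδ) hy
  exact ((dist_eq_norm (Ψ' z i) (Ψ' x i)).symm.trans_le (dist_coe_le_dist i)).trans (hball z hz).le

theorem contDiff_one_bcf {Ψ : X → α →ᵇ G} {Ψ' : X → α →ᵇ (X →L[ℝ] G)}
    (hΨ : ∀ i y, HasFDerivAt (fun z => Ψ z i) (Ψ' y i) y) (hΨ' : Continuous Ψ') :
    ContDiff ℝ 1 Ψ :=
  contDiff_one_iff_hasFDerivAt.2
    ⟨fun x => bcfFlip (Ψ' x), bcfFlip.continuous.comp hΨ',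
      fun _ => hasFDerivAt_bcf hΨ hΨ'.continuousAt⟩

end Calculus

section FixedPoint

variable {𝕜 W X : Type*} [RCLike 𝕜] [NormedAddCommGroup W] [NormedSpace 𝕜 W] [CompleteSpace W]
  [NormedAddCommGroup X] [NormedSpace 𝕜 X] [CompleteSpace X]

theorem isInvertible_one_sub_of_norm_lt_one {D : X →L[𝕜] X} (hD : ‖D‖ < 1) :
    (1 - D).IsInvertible :=
  ⟨ContinuousLinearEquiv.ofUnit (Units.oneSub D hD), rfl⟩

theorem contDiffAt_fixedPoint {T : W × X → X} {ξ : W → X} {w : W} {K : NNReal} {n : ℕ∞ω}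
    (hn : n ≠ 0) (hT : ContDiffAt 𝕜 n T (w, ξ w)) (hK : ContractingWith K fun x => T (w, x))
    (hξ : ContinuousAt ξ w) (hfix : ∀ᶠ v in 𝓝 w, T (v, ξ v) = ξ v) : ContDiffAt 𝕜 n ξ w := by
  let Φ : W × X → X := fun z => z.2 - T z
  have hΦ : ContDiffAt 𝕜 n Φ (w, ξ w) := contDiffAt_snd.sub hT
  have hTd : HasFDerivAt T (fderiv 𝕜 T (w, ξ w)) (w, ξ w) :=
    (hT.differentiableAt hn).hasFDerivAt
  have hD : ‖fderiv 𝕜 T (w, ξ w) ∘L .inr 𝕜 W X‖ < 1 :=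
    ((hTd.comp (ξ w) (hasFDerivAt_prodMk_right w (ξ w))).le_of_lipschitz hK.2).trans_lt hK.1
  have hinv : (fderiv 𝕜 Φ (w, ξ w) ∘L .inr 𝕜 W X).IsInvertible := by
    have hΦd : HasFDerivAt Φ (.snd 𝕜 W X - fderiv 𝕜 T (w, ξ w)) (w, ξ w) :=
      hasFDerivAt_snd.sub hTd
    convert isInvertible_one_sub_of_norm_lt_one hD
    rw [hΦd.fderiv]
    ext x
    simp
  have hgraph : Tendsto (fun v => (v, ξ v)) (𝓝 w) (𝓝 (w, ξ w)) := continuousAt_id.prodMk hξ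
  refine (hΦ.contDiffAt_implicitFunction hn hinv).congr_of_eventuallyEq ?_
  filter_upwards [hfix, hgraph.eventually
    (hΦ.eventually_apply_eq_iff_implicitFunction hn hinv)] with v hv himplicit
  refine (himplicit.1 ?_).symm
  simp only [Φ, hv, hfix.self_of_nhds, sub_self]

end FixedPoint

section Perturbation

variable {V G X : Type*} [NormedAddCommGroup V] [NormedSpace ℝ V] [NormedAddCommGroup G]
  [NormedSpace ℝ G] [NormedAddCommGroup X] [NormedSpace ℝ X] {c : ℝ → ℝ} {g : ℝ × V → G}

/-- A `C¹` time-dependent map `g` which is dominated, together with its total derivative, by a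
weight `c` decreasing to zero in the time variable. -/
structure IsDecayingPerturbation (c : ℝ → ℝ) (g : ℝ × V → G) : Prop where
  antitone : Antitone c
  tendsto_zero : Tendsto c atTop (𝓝 0)
  contDiff : ContDiff ℝ 1 g
  norm_le : ∀ z, ‖g z‖ ≤ c z.1
  norm_fderiv_le : ∀ z, ‖fderiv ℝ g z‖ ≤ c z.1

theorem IsDecayingPerturbation.nonneg (hg : IsDecayingPerturbation c g) (t : ℝ) : 0 ≤ c t :=
  hg.antitone.le_of_tendsto hg.tendsto_zero t

theorem IsDecayingPerturbation.hasFDerivAt (hg : IsDecayingPerturbation c g) (z : ℝ × V) :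
    HasFDerivAt g (fderiv ℝ g z) z :=
  (hg.contDiff.differentiable one_ne_zero z).hasFDerivAt

theorem IsDecayingPerturbation.norm_sub_le (hg : IsDecayingPerturbation c g) {τ : ℝ}
    {z z' : ℝ × V} (hz : τ ≤ z.1) (hz' : τ ≤ z'.1) : ‖g z - g z'‖ ≤ c τ * ‖z - z'‖ :=
  (convex_halfSpace_ge (LinearMap.fst ℝ ℝ V).isLinear τ).norm_image_sub_le_of_norm_fderiv_le
    (fun y _ => (hg.hasFDerivAt y).differentiableAt)
    (fun y hy => (hg.norm_fderiv_le y).trans (hg.antitone hy)) hz' hz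

/-- The time and state of the `n + 1`-st point of a past history encoded by `x`, when the history
starts at time `w.1`; the operator `p n` reads this state off the encoding. -/
def samplePoint (p : ℕ → X →L[ℝ] V) (n : ℕ) (w : ℝ × X) : ℝ × V :=
  (w.1 + n + 1, p n w.2)

variable {p : ℕ → X →L[ℝ] V}

theorem hasFDerivAt_samplePoint (n : ℕ) (w : ℝ × X) :
    HasFDerivAt (samplePoint p n) ((ContinuousLinearMap.id ℝ ℝ).prodMap (p n)) w :=
  ((hasFDerivAt_fst.add_const _).add_const _).prodMk ((p n).hasFDerivAt.comp w hasFDerivAt_snd)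

theorem norm_id_prodMap_le_one {p : X →L[ℝ] V} (hp : ‖p‖ ≤ 1) :
    ‖(ContinuousLinearMap.id ℝ ℝ).prodMap p‖ ≤ 1 :=
  ContinuousLinearMap.opNorm_le_bound _ zero_le_one fun w => by
    rw [one_mul]
    exact max_le_max le_rfl (by simpa using p.le_of_opNorm_le hp w.2)

theorem add_one_le_samplePoint_fst (n : ℕ) (w : ℝ × X) : w.1 + 1 ≤ (samplePoint p n w).1 := by
  simp [samplePoint]

theorem norm_samplePoint_sub_le {n : ℕ} (hp : ‖p n‖ ≤ 1) (w w' : ℝ × X) :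
    ‖samplePoint p n w - samplePoint p n w'‖ ≤ ‖w - w'‖ := by
  have hsub : samplePoint p n w - samplePoint p n w' =
      (ContinuousLinearMap.id ℝ ℝ).prodMap (p n) (w - w') := by
    ext <;> simp [samplePoint]
  simpa [hsub] using ContinuousLinearMap.le_of_opNorm_le _ (norm_id_prodMap_le_one hp) (w - w')

/-- The superposition (Nemytskii) operator of `g`: evaluates `g` along the past history encoded by
a point of `X`. -/
noncomputable def superposition (hg : IsDecayingPerturbation c g) (p : ℕ → X →L[ℝ] V)
    (w : ℝ × X) : ℕ →ᵇ G :=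
  ofNormedAddCommGroupDiscrete (fun n => g (samplePoint p n w)) (c (w.1 + 1)) fun n =>
    (hg.norm_le _).trans (hg.antitone (add_one_le_samplePoint_fst n w))

theorem norm_superposition_le (hg : IsDecayingPerturbation c g) {τ : ℝ} {w : ℝ × X}
    (hw : τ ≤ w.1 + 1) : ‖superposition hg p w‖ ≤ c τ :=
  (norm_le (hg.nonneg τ)).2 fun n =>
    (hg.norm_le _).trans (hg.antitone (hw.trans (add_one_le_samplePoint_fst n w)))

theorem norm_superposition_sub_le (hg : IsDecayingPerturbation c g) (hp : ∀ n, ‖p n‖ ≤ 1) {τ : ℝ}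
    {w w' : ℝ × X} (hw : τ ≤ w.1 + 1) (hw' : τ ≤ w'.1 + 1) :
    ‖superposition hg p w - superposition hg p w'‖ ≤ c τ * ‖w - w'‖ :=
  (norm_le (mul_nonneg (hg.nonneg τ) (norm_nonneg _))).2 fun n =>
    (hg.norm_sub_le (hw.trans (add_one_le_samplePoint_fst n w))
      (hw'.trans (add_one_le_samplePoint_fst n w'))).trans
      (mul_le_mul_of_nonneg_left (norm_samplePoint_sub_le (hp n) w w') (hg.nonneg τ))

theorem norm_fderiv_comp_id_prodMap_le (hg : IsDecayingPerturbation c g) (hp : ∀ n, ‖p n‖ ≤ 1)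
    (n : ℕ) (w : ℝ × X) :
    ‖fderiv ℝ g (samplePoint p n w) ∘L (ContinuousLinearMap.id ℝ ℝ).prodMap (p n)‖ ≤
      c (w.1 + n + 1) :=
  (ContinuousLinearMap.opNorm_comp_le _ _).trans <| (mul_le_of_le_one_right (norm_nonneg _)
    (norm_id_prodMap_le_one (hp n))).trans (hg.norm_fderiv_le _)

theorem equicontinuous_fderiv_samplePoint (hg : IsDecayingPerturbation c g)
    (hp : ∀ n, ‖p n‖ ≤ 1) :
    Equicontinuous fun n w =>
      fderiv ℝ g (samplePoint p n w) ∘L (ContinuousLinearMap.id ℝ ℝ).prodMap (p n) := by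
  intro w
  refine equicontinuousAt_of_tendsto_cofinite (y := 0) (fun n => ?_) ?_
  · exact (((hg.contDiff.continuous_fderiv one_ne_zero).continuousAt.comp
      (hasFDerivAt_samplePoint n w).continuousAt).clm_comp continuousAt_const)
  · have htime : Tendsto (fun q : ℕ × (ℝ × X) => q.2.1 + q.1 + 1) (cofinite ×ˢ 𝓝 w) atTop := by
      rw [Nat.cofinite_eq_atTop]
      exact tendsto_atTop_add_const_right _ _
        ((continuous_fst.tendsto w |>.comp tendsto_snd).add_atTop
          (tendsto_natCast_atTop_atTop.comp tendsto_fst))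
    exact squeeze_zero_norm (fun q => norm_fderiv_comp_id_prodMap_le hg hp q.1 q.2)
      (hg.tendsto_zero.comp htime)

theorem contDiff_superposition (hg : IsDecayingPerturbation c g) (hp : ∀ n, ‖p n‖ ≤ 1) :
    ContDiff ℝ 1 (superposition hg p) := by
  let Ψ' (w : ℝ × X) : ℕ →ᵇ ((ℝ × X) →L[ℝ] G) :=
    ofNormedAddCommGroupDiscrete
      (fun n => fderiv ℝ g (samplePoint p n w) ∘L (ContinuousLinearMap.id ℝ ℝ).prodMap (p n))
      (c (w.1 + 1)) fun n => (norm_fderiv_comp_id_prodMap_le hg hp n w).trans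
        (hg.antitone (add_one_le_samplePoint_fst (p := p) n w))
  refine contDiff_one_bcf (Ψ' := Ψ') (fun n w => ?_) ?_
  · exact (hg.hasFDerivAt (samplePoint p n w)).comp w (hasFDerivAt_samplePoint n w)
  · exact continuous_iff_continuousAt.2 fun w =>
      continuousAt_bcf_iff_equicontinuousAt.2 (equicontinuous_fderiv_samplePoint hg hp w)

end Perturbation

section BoundedSequences

variable {G H : Type*} [NormedAddCommGroup G] [NormedSpace ℝ G] [NormedAddCommGroup H]
  [NormedSpace ℝ H]

theorem norm_compLeftContinuousBounded_apply_le {α : Type*} [TopologicalSpace α] (L : G →L[ℝ] H)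
    (x : α →ᵇ G) : ‖L.compLeftContinuousBounded α x‖ ≤ ‖L‖ * ‖x‖ :=
  (norm_le (by positivity)).2 fun i => L.le_opNorm_of_le (x.norm_coe_le_norm i)

/-- The sequence `a, x 0, x 1, …`. -/
def consSeq {α : Type*} (a : α) (x : ℕ → α) : ℕ → α
  | 0 => a
  | n + 1 => x n

theorem norm_consSeq_le {G : Type*} [NormedAddCommGroup G] (p : G × (ℕ →ᵇ G)) :
    ∀ n, ‖consSeq p.1 p.2 n‖ ≤ ‖p‖
  | 0 => norm_fst_le p
  | n + 1 => (p.2.norm_coe_le_norm n).trans (norm_snd_le p)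

/-- `consSeq` as a continuous linear map into the space of bounded sequences. -/
noncomputable def consCLM : (G × (ℕ →ᵇ G)) →L[ℝ] (ℕ →ᵇ G) :=
  LinearMap.mkContinuous
    { toFun p := ofNormedAddCommGroupDiscrete (consSeq p.1 p.2) ‖p‖ (norm_consSeq_le p)
      map_add' _ _ := by ext (_ | _) <;> rfl
      map_smul' _ _ := by ext (_ | _) <;> rfl }
    1 fun p => by
      rw [one_mul]
      exact (norm_le (norm_nonneg p)).2 (norm_consSeq_le p)

theorem norm_consCLM_apply_le (p : G × (ℕ →ᵇ G)) : ‖consCLM p‖ ≤ max ‖p.1‖ ‖p.2‖ :=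
  (norm_le (norm_nonneg p)).2 (norm_consSeq_le p)

/-- The left shift `x ↦ (x 1, x 2, …)` on bounded sequences. -/
noncomputable def shiftCLM : (ℕ →ᵇ G) →L[ℝ] (ℕ →ᵇ G) :=
  compContinuousCLM G ℝ ⟨Nat.succ, continuous_of_discreteTopology⟩

theorem norm_comp_shiftCLM_le (L : G →L[ℝ] H) (x : ℕ →ᵇ G) :
    ‖L.compLeftContinuousBounded ℕ (shiftCLM x)‖ ≤ ‖L‖ * ‖x‖ :=
  (norm_compLeftContinuousBounded_apply_le L _).trans
    (mul_le_mul_of_nonneg_left (norm_compContinuous_le x _) (norm_nonneg L))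

/-- Pairs of bounded sequences, encoding the unstable and stable components of a bounded past
history. -/
abbrev PastSeq (G H : Type*) [NormedAddCommGroup G] [NormedAddCommGroup H] : Type _ :=
  (ℕ →ᵇ G) × (ℕ →ᵇ H)

theorem exists_pastSeq_eq {G H : Type*} [NormedAddCommGroup G] [NormedAddCommGroup H]
    {x : ℕ → G × H} (hx : Bornology.IsBounded (range x)) :
    ∃ y : PastSeq G H, (fun n => (y.1 n, y.2 n)) = x := by
  obtain ⟨K, hK⟩ := hx.exists_norm_le
  have hbound (n : ℕ) : ‖x n‖ ≤ K := hK _ (mem_range_self n)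
  exact ⟨(ofNormedAddCommGroupDiscrete (fun n => (x n).1) K fun n =>
      (norm_fst_le _).trans (hbound n),
    ofNormedAddCommGroupDiscrete (fun n => (x n).2) K fun n => (norm_snd_le _).trans (hbound n)),
    rfl⟩

theorem isBounded_range_pastSeq {G H : Type*} [NormedAddCommGroup G] [NormedAddCommGroup H]
    (y : PastSeq G H) : Bornology.IsBounded (range fun n => (y.1 n, y.2 n)) :=
  (y.1.isBounded_range.prod y.2.isBounded_range).subset (range_pair_subset y.1 y.2)

/-- The state at step `n + 1` of a past history. -/
noncomputable def pastState (n : ℕ) : PastSeq G H →L[ℝ] G × H :=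
  (evalCLM ℝ (n + 1)).prodMap (evalCLM ℝ (n + 1))

theorem norm_pastState_le_one (n : ℕ) : ‖(pastState n : PastSeq G H →L[ℝ] G × H)‖ ≤ 1 :=
  ContinuousLinearMap.opNorm_le_bound _ zero_le_one fun x => by
    rw [one_mul]
    exact max_le_max (x.1.norm_coe_le_norm _) (x.2.norm_coe_le_norm _)

end BoundedSequences

section Model

variable {E F : Type*} [NormedAddCommGroup E] [NormedSpace ℝ E] [NormedAddCommGroup F]
  [NormedSpace ℝ F] {A : E ≃L[ℝ] E} {B : F →L[ℝ] F} {g : ℝ × (E × F) → E × F}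

/-- The action of the perturbed model map on states at time `t`. -/
def timeStep (A : E ≃L[ℝ] E) (B : F →L[ℝ] F) (g : ℝ × (E × F) → E × F) (t : ℝ) (v : E × F) :
    E × F :=
  (A v.1 + (g (t, v)).1, B v.2 + (g (t, v)).2)

/-- The perturbed model map `f`, which decreases the time variable by one. -/
def modelMap (A : E ≃L[ℝ] E) (B : F →L[ℝ] F) (g : ℝ × (E × F) → E × F) (w : ℝ × E × F) :
    ℝ × E × F :=
  (w.1 - 1, timeStep A B g w.1 w.2)

/-- The sequence of states `x` is bounded and `(t, x 0), (t + 1, x 1), …` is a backward orbit of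
the model map. -/
structure IsBoundedBackwardOrbit (A : E ≃L[ℝ] E) (B : F →L[ℝ] F) (g : ℝ × (E × F) → E × F)
    (t : ℝ) (x : ℕ → E × F) : Prop where
  isBounded : Bornology.IsBounded (range x)
  eq_timeStep : ∀ n : ℕ, x n = timeStep A B g (t + n + 1) (x (n + 1))

theorem IsBoundedBackwardOrbit.tail {t : ℝ} {x : ℕ → E × F}
    (hx : IsBoundedBackwardOrbit A B g t x) :
    IsBoundedBackwardOrbit A B g (t + 1) fun n => x (n + 1) where
  isBounded := hx.isBounded.subset (range_comp_subset_range Nat.succ x)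
  eq_timeStep n := by
    rw [hx.eq_timeStep (n + 1)]
    push_cast
    ring_nf

theorem IsBoundedBackwardOrbit.cons {t : ℝ} {x : ℕ → E × F}
    (hx : IsBoundedBackwardOrbit A B g (t + 1) x) :
    IsBoundedBackwardOrbit A B g t (consSeq (timeStep A B g (t + 1) (x 0)) x) where
  isBounded := (hx.isBounded.insert (timeStep A B g (t + 1) (x 0))).subset <| by
    rintro _ ⟨_ | n, rfl⟩
    exacts [mem_insert _ _, mem_insert_of_mem _ (mem_range_self n)]
  eq_timeStep
    | 0 => by simp [consSeq]
    | n + 1 => by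
      simp only [consSeq]
      rw [hx.eq_timeStep n]
      push_cast
      ring_nf

end Model

section LyapunovPerron

variable {E F : Type*} [NormedAddCommGroup E] [NormedSpace ℝ E] [NormedAddCommGroup F]
  [NormedSpace ℝ F] {A : E ≃L[ℝ] E} {B : F →L[ℝ] F} {c : ℝ → ℝ} {g : ℝ × (E × F) → E × F}

/-- The Lyapunov–Perron operator: at parameters `(t, u)`, its fixed points are the bounded backward
orbits of the model map which start at time `t` with unstable component `u`. -/
noncomputable def lyapunovPerron (A : E ≃L[ℝ] E) (B : F →L[ℝ] F)
    (hg : IsDecayingPerturbation c g) (z : (ℝ × E) × PastSeq E F) : PastSeq E F :=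
  (consCLM (z.1.2, (A.symm : E →L[ℝ] E).compLeftContinuousBounded ℕ
      (z.2.1 - (ContinuousLinearMap.fst ℝ E F).compLeftContinuousBounded ℕ
        (superposition hg pastState (z.1.1, z.2)))),
    B.compLeftContinuousBounded ℕ (shiftCLM z.2.2) +
      (ContinuousLinearMap.snd ℝ E F).compLeftContinuousBounded ℕ
        (superposition hg pastState (z.1.1, z.2)))

theorem contDiff_lyapunovPerron (hg : IsDecayingPerturbation c g) :
    ContDiff ℝ 1 (lyapunovPerron A B hg) := by
  have hN : ContDiff ℝ 1 fun z : (ℝ × E) × PastSeq E F =>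
      superposition hg pastState (z.1.1, z.2) :=
    (contDiff_superposition hg norm_pastState_le_one).comp (by fun_prop)
  unfold lyapunovPerron
  fun_prop

theorem isFixedPt_lyapunovPerron_iff {hg : IsDecayingPerturbation c g} {w : ℝ × E}
    {x : PastSeq E F} : IsFixedPt (fun y => lyapunovPerron A B hg (w, y)) x ↔
      x.1 0 = w.2 ∧ IsBoundedBackwardOrbit A B g w.1 fun n => (x.1 n, x.2 n) := by
  have hE (n : ℕ) : A.symm (x.1 n - (g (samplePoint pastState n (w.1, x))).1) = x.1 (n + 1) ↔
      x.1 n = A (x.1 (n + 1)) + (g (samplePoint pastState n (w.1, x))).1 := by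
    rw [A.symm_apply_eq, sub_eq_iff_eq_add]
  calc IsFixedPt (fun y => lyapunovPerron A B hg (w, y)) x
    _ ↔ (w.2 = x.1 0 ∧ ∀ n, A.symm (x.1 n - (g (samplePoint pastState n (w.1, x))).1) =
          x.1 (n + 1)) ∧
        ∀ n, B (x.2 (n + 1)) + (g (samplePoint pastState n (w.1, x))).2 = x.2 n := by
      rw [IsFixedPt, Prod.ext_iff, BoundedContinuousFunction.ext_iff,
        BoundedContinuousFunction.ext_iff, ← Nat.and_forall_add_one]
      rfl
    _ ↔ x.1 0 = w.2 ∧ IsBoundedBackwardOrbit A B g w.1 fun n => (x.1 n, x.2 n) := by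
      simp only [hE, and_assoc, ← forall_and, eq_comm (a := w.2)]
      refine and_congr_right fun _ => ⟨fun h => ⟨isBounded_range_pastSeq x, fun n => ?_⟩,
        fun h n => ?_⟩
      · exact Prod.ext (h n).1 (h n).2.symm
      · exact ⟨congrArg Prod.fst (h.eq_timeStep n), (congrArg Prod.snd (h.eq_timeStep n)).symm⟩

/-- The Lipschitz constant of the Lyapunov–Perron operator in the history variable when the
perturbation has Lipschitz constant `ε`. -/
noncomputable def contractionRate (A : E ≃L[ℝ] E) (B : F →L[ℝ] F) (ε : ℝ) : ℝ :=
  max (‖(A.symm : E →L[ℝ] E)‖ * (1 + ε)) (‖B‖ + ε)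

theorem contractionRate_mono : Monotone (contractionRate A B) := fun _ _ h => by
  unfold contractionRate
  gcongr

theorem tendsto_contractionRate (hg : IsDecayingPerturbation c g) :
    Tendsto (fun t => contractionRate A B (c t)) atTop
      (𝓝 (max ‖(A.symm : E →L[ℝ] E)‖ ‖B‖)) := by
  simpa [contractionRate] using ((hg.tendsto_zero.const_add 1).const_mul
    ‖(A.symm : E →L[ℝ] E)‖).max (hg.tendsto_zero.const_add ‖B‖)

theorem IsDecayingPerturbation.one_sub_norm_pos (hg : IsDecayingPerturbation c g) {τ : ℝ}
    (hτ : contractionRate A B (c τ) < 1) : 0 < 1 - ‖B‖ :=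
  sub_pos.2 <| (le_add_of_nonneg_right (hg.nonneg τ)).trans_lt ((le_max_right ..).trans_lt hτ)

theorem norm_superposition_pastState_sub_le (hg : IsDecayingPerturbation c g) {τ : ℝ}
    {z z' : (ℝ × E) × PastSeq E F} (hz : τ ≤ z.1.1 + 1) (hz' : τ ≤ z'.1.1 + 1) :
    ‖superposition hg pastState (z.1.1, z.2) - superposition hg pastState (z'.1.1, z'.2)‖ ≤
      c τ * ‖z - z'‖ :=
  (norm_superposition_sub_le hg norm_pastState_le_one hz hz').trans <|
    mul_le_mul_of_nonneg_left (max_le_max (norm_fst_le (z.1 - z'.1)) le_rfl) (hg.nonneg τ)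

theorem norm_consCLM_symm_sub_fst_le (u : E) (a : ℕ →ᵇ E) (N : ℕ →ᵇ E × F) :
    ‖consCLM (u, (A.symm : E →L[ℝ] E).compLeftContinuousBounded ℕ
      (a - (ContinuousLinearMap.fst ℝ E F).compLeftContinuousBounded ℕ N))‖ ≤
      max ‖u‖ (‖(A.symm : E →L[ℝ] E)‖ * (‖a‖ + ‖N‖)) := by
  refine (norm_consCLM_apply_le _).trans (max_le_max le_rfl ?_)
  refine (norm_compLeftContinuousBounded_apply_le _ _).trans ?_
  gcongr
  exact (norm_sub_le _ _).trans (add_le_add_right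
    ((norm_compLeftContinuousBounded_apply_le _ N).trans
      (mul_le_of_le_one_left (norm_nonneg N) (ContinuousLinearMap.norm_fst_le ..))) _)

theorem norm_comp_shiftCLM_add_snd_le (b : ℕ →ᵇ F) (N : ℕ →ᵇ E × F) :
    ‖B.compLeftContinuousBounded ℕ (shiftCLM b) +
      (ContinuousLinearMap.snd ℝ E F).compLeftContinuousBounded ℕ N‖ ≤ ‖B‖ * ‖b‖ + ‖N‖ :=
  norm_add_le_of_le (norm_comp_shiftCLM_le B b)
    ((norm_compLeftContinuousBounded_apply_le _ N).trans
      (mul_le_of_le_one_left (norm_nonneg N) (ContinuousLinearMap.norm_snd_le ..)))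

theorem norm_lyapunovPerron_sub_fst_le (hg : IsDecayingPerturbation c g) {τ : ℝ}
    {z z' : (ℝ × E) × PastSeq E F} (hz : τ ≤ z.1.1 + 1) (hz' : τ ≤ z'.1.1 + 1) :
    ‖(lyapunovPerron A B hg z - lyapunovPerron A B hg z').1‖ ≤
      max ‖z.1 - z'.1‖ (‖(A.symm : E →L[ℝ] E)‖ * (1 + c τ) * ‖z - z'‖) := by
  have hN := norm_superposition_pastState_sub_le hg hz hz'
  have ha : ‖z.2.1 - z'.2.1‖ ≤ ‖z - z'‖ :=
    (norm_fst_le (z.2 - z'.2)).trans (norm_snd_le (z - z'))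
  calc ‖(lyapunovPerron A B hg z - lyapunovPerron A B hg z').1‖
    _ = ‖consCLM (z.1.2 - z'.1.2, (A.symm : E →L[ℝ] E).compLeftContinuousBounded ℕ
          (z.2.1 - z'.2.1 - (ContinuousLinearMap.fst ℝ E F).compLeftContinuousBounded ℕ
            (superposition hg pastState (z.1.1, z.2) -
              superposition hg pastState (z'.1.1, z'.2))))‖ := by
      rw [map_sub _ (superposition ..), sub_sub_sub_comm, map_sub _ (z.2.1 - _),
        ← Prod.mk_sub_mk, map_sub]
      rfl
    _ ≤ max ‖z.1.2 - z'.1.2‖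
          (‖(A.symm : E →L[ℝ] E)‖ * (‖z.2.1 - z'.2.1‖ + c τ * ‖z - z'‖)) :=
      (norm_consCLM_symm_sub_fst_le ..).trans (by gcongr)
    _ ≤ max ‖z.1 - z'.1‖ (‖(A.symm : E →L[ℝ] E)‖ * (1 + c τ) * ‖z - z'‖) := by
      rw [mul_assoc, one_add_mul]
      gcongr
      exact norm_snd_le (z.1 - z'.1)

theorem norm_lyapunovPerron_sub_snd_le (hg : IsDecayingPerturbation c g) {τ : ℝ}
    {z z' : (ℝ × E) × PastSeq E F} (hz : τ ≤ z.1.1 + 1) (hz' : τ ≤ z'.1.1 + 1) :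
    ‖(lyapunovPerron A B hg z - lyapunovPerron A B hg z').2‖ ≤ (‖B‖ + c τ) * ‖z - z'‖ := by
  have hN := norm_superposition_pastState_sub_le hg hz hz'
  have hb : ‖z.2.2 - z'.2.2‖ ≤ ‖z - z'‖ :=
    (norm_snd_le (z.2 - z'.2)).trans (norm_snd_le (z - z'))
  calc ‖(lyapunovPerron A B hg z - lyapunovPerron A B hg z').2‖
    _ = ‖B.compLeftContinuousBounded ℕ (shiftCLM (z.2.2 - z'.2.2)) +
          (ContinuousLinearMap.snd ℝ E F).compLeftContinuousBounded ℕ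
            (superposition hg pastState (z.1.1, z.2) -
              superposition hg pastState (z'.1.1, z'.2))‖ := by
      rw [map_sub, map_sub, map_sub, sub_add_sub_comm]
      rfl
    _ ≤ ‖B‖ * ‖z - z'‖ + c τ * ‖z - z'‖ :=
      (norm_comp_shiftCLM_add_snd_le ..).trans (by gcongr)
    _ = (‖B‖ + c τ) * ‖z - z'‖ := (add_mul ..).symm

theorem norm_lyapunovPerron_sub_le (hg : IsDecayingPerturbation c g) {τ : ℝ}
    {z z' : (ℝ × E) × PastSeq E F} (hz : τ ≤ z.1.1 + 1) (hz' : τ ≤ z'.1.1 + 1) :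
    ‖lyapunovPerron A B hg z - lyapunovPerron A B hg z'‖ ≤
      max ‖z.1 - z'.1‖ (contractionRate A B (c τ) * ‖z - z'‖) := by
  refine max_le ((norm_lyapunovPerron_sub_fst_le hg hz hz').trans ?_)
    ((norm_lyapunovPerron_sub_snd_le hg hz hz').trans (le_max_of_le_right ?_))
  · gcongr
    exact le_max_left ..
  · gcongr
    exact le_max_right ..

/-- The history solving the Lyapunov–Perron equation at the parameters `w`; a junk value when there
is no solution. -/
noncomputable def pastOrbit (A : E ≃L[ℝ] E) (B : F →L[ℝ] F) (hg : IsDecayingPerturbation c g)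
    (w : ℝ × E) : PastSeq E F :=
  Classical.epsilon (IsFixedPt fun x => lyapunovPerron A B hg (w, x))

/-- The map whose graph is the perturbed unstable manifold: the stable component of the present
state of the bounded backward orbit with parameters `w`. -/
noncomputable def unstableGraph (A : E ≃L[ℝ] E) (B : F →L[ℝ] F)
    (hg : IsDecayingPerturbation c g) (w : ℝ × E) : F :=
  (pastOrbit A B hg w).2 0

theorem contractingWith_lyapunovPerron (hg : IsDecayingPerturbation c g) {τ : ℝ}
    (hτ : contractionRate A B (c τ) < 1) {w : ℝ × E} (hw : τ ≤ w.1 + 1) :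
    ContractingWith (contractionRate A B (c τ)).toNNReal
      fun x => lyapunovPerron A B hg (w, x) := by
  refine ⟨Real.toNNReal_lt_one.2 hτ, LipschitzWith.of_dist_le_mul fun x x' => ?_⟩
  have hrate : 0 ≤ contractionRate A B (c τ) :=
    le_max_of_le_right (add_nonneg (norm_nonneg B) (hg.nonneg τ))
  have hsub := norm_lyapunovPerron_sub_le (A := A) (B := B) hg (z := (w, x)) (z' := (w, x')) hw hw
  simpa [Real.coe_toNNReal _ hrate, dist_eq_norm, hrate, mul_nonneg] using hsub

theorem eventually_le_fst_add_one {Y : Type*} [TopologicalSpace Y] {τ : ℝ} {w : ℝ × Y}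
    (hw : τ < w.1 + 1) : ∀ᶠ w' : ℝ × Y in 𝓝 w, τ ≤ w'.1 + 1 :=
  ((continuous_fst.add continuous_const).continuousAt.eventually (lt_mem_nhds hw)).mono
    fun _ => le_of_lt

section Complete

variable [CompleteSpace E] [CompleteSpace F]

theorem isFixedPt_pastOrbit (hg : IsDecayingPerturbation c g) {τ : ℝ}
    (hτ : contractionRate A B (c τ) < 1) {w : ℝ × E} (hw : τ ≤ w.1 + 1) :
    IsFixedPt (fun x => lyapunovPerron A B hg (w, x)) (pastOrbit A B hg w) :=
  Classical.epsilon_spec ⟨_, (contractingWith_lyapunovPerron hg hτ hw).fixedPoint_isFixedPt⟩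

theorem norm_pastOrbit_sub_le (hg : IsDecayingPerturbation c g) {τ : ℝ}
    (hτ : contractionRate A B (c τ) < 1) {w w' : ℝ × E} (hw : τ ≤ w.1 + 1) (hw' : τ ≤ w'.1 + 1) :
    ‖pastOrbit A B hg w - pastOrbit A B hg w'‖ ≤ ‖w - w'‖ := by
  have hsub := norm_lyapunovPerron_sub_le (A := A) (B := B) hg
    (z := (w, pastOrbit A B hg w)) (z' := (w', pastOrbit A B hg w')) hw hw'
  rw [(isFixedPt_pastOrbit hg hτ hw).eq, (isFixedPt_pastOrbit hg hτ hw').eq] at hsub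
  by_contra! hlt
  have hnorm : ‖(w, pastOrbit A B hg w) - (w', pastOrbit A B hg w')‖ =
      ‖pastOrbit A B hg w - pastOrbit A B hg w'‖ := max_eq_right hlt.le
  rw [hnorm] at hsub
  exact hsub.not_gt (max_lt hlt (mul_lt_of_lt_one_left ((norm_nonneg _).trans_lt hlt) hτ))

theorem contDiffAt_pastOrbit (hg : IsDecayingPerturbation c g) {τ : ℝ}
    (hτ : contractionRate A B (c τ) < 1) {w : ℝ × E} (hw : τ < w.1 + 1) :
    ContDiffAt ℝ 1 (pastOrbit A B hg) w := by
  have hlip : LipschitzOnWith 1 (pastOrbit A B hg) {w' | τ ≤ w'.1 + 1} :=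
    .of_dist_le_mul fun v hv v' hv' => by
      simpa [dist_eq_norm] using norm_pastOrbit_sub_le hg hτ hv hv'
  exact contDiffAt_fixedPoint one_ne_zero (contDiff_lyapunovPerron hg).contDiffAt
    (contractingWith_lyapunovPerron hg hτ hw.le)
    (hlip.continuousOn.continuousAt (eventually_le_fst_add_one hw))
    ((eventually_le_fst_add_one hw).mono fun _ => isFixedPt_pastOrbit hg hτ)

theorem contDiffAt_unstableGraph (hg : IsDecayingPerturbation c g) {τ : ℝ}
    (hτ : contractionRate A B (c τ) < 1) {w : ℝ × E} (hw : τ < w.1 + 1) :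
    ContDiffAt ℝ 1 (unstableGraph A B hg) w :=
  (evalCLM ℝ 0 : (ℕ →ᵇ F) →L[ℝ] F).contDiff.contDiffAt.comp w (contDiffAt_pastOrbit hg hτ hw).snd

theorem eq_unstableGraph_iff (hg : IsDecayingPerturbation c g) {τ : ℝ}
    (hτ : contractionRate A B (c τ) < 1) {t : ℝ} (ht : τ ≤ t + 1) {u : E} {s : F} :
    s = unstableGraph A B hg (t, u) ↔
      ∃ x, IsBoundedBackwardOrbit A B g t x ∧ x 0 = (u, s) := by
  obtain ⟨hu, horbit⟩ := isFixedPt_lyapunovPerron_iff.1 (isFixedPt_pastOrbit hg hτ (w := (t, u)) ht)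
  constructor
  · rintro rfl
    exact ⟨_, horbit, Prod.ext hu rfl⟩
  · rintro ⟨x, hx, hx0⟩
    obtain ⟨y, rfl⟩ := exists_pastSeq_eq hx.isBounded
    obtain ⟨hy0, rfl⟩ := Prod.ext_iff.1 hx0
    have hy : IsFixedPt (fun x => lyapunovPerron A B hg ((t, u), x)) y :=
      isFixedPt_lyapunovPerron_iff.2 ⟨hy0, hx⟩
    rw [unstableGraph, (contractingWith_lyapunovPerron hg hτ ht).fixedPoint_unique' hy
      (isFixedPt_pastOrbit hg hτ ht)]

theorem pastOrbit_snd_eq (hg : IsDecayingPerturbation c g) {τ : ℝ}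
    (hτ : contractionRate A B (c τ) < 1) {w : ℝ × E} (hw : τ ≤ w.1 + 1) :
    (pastOrbit A B hg w).2 =
      B.compLeftContinuousBounded ℕ (shiftCLM (pastOrbit A B hg w).2) +
        (ContinuousLinearMap.snd ℝ E F).compLeftContinuousBounded ℕ
          (superposition hg pastState (w.1, pastOrbit A B hg w)) :=
  congrArg Prod.snd (isFixedPt_pastOrbit hg hτ hw).symm

theorem norm_unstableGraph_le (hg : IsDecayingPerturbation c g) {τ : ℝ}
    (hτ : contractionRate A B (c τ) < 1) {w : ℝ × E} (hw : τ ≤ w.1 + 1) :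
    ‖unstableGraph A B hg w‖ ≤ (1 - ‖B‖)⁻¹ * c τ := by
  set b := (pastOrbit A B hg w).2
  have hb : ‖b‖ ≤ ‖B‖ * ‖b‖ + c τ := calc
    ‖b‖ = _ := congrArg norm (pastOrbit_snd_eq hg hτ hw)
    _ ≤ ‖B‖ * ‖b‖ + _ := norm_comp_shiftCLM_add_snd_le ..
    _ ≤ ‖B‖ * ‖b‖ + c τ := by
      gcongr
      exact norm_superposition_le hg hw
  refine (b.norm_coe_le_norm 0).trans ?_
  rw [le_inv_mul_iff₀ (hg.one_sub_norm_pos hτ)]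
  linarith

theorem norm_unstableGraph_sub_le (hg : IsDecayingPerturbation c g) {τ : ℝ}
    (hτ : contractionRate A B (c τ) < 1) {w w' : ℝ × E} (hw : τ ≤ w.1 + 1)
    (hw' : τ ≤ w'.1 + 1) :
    ‖unstableGraph A B hg w - unstableGraph A B hg w'‖ ≤ (1 - ‖B‖)⁻¹ * c τ * ‖w - w'‖ := by
  set b := (pastOrbit A B hg w).2
  set b' := (pastOrbit A B hg w').2
  set N := superposition hg pastState (w.1, pastOrbit A B hg w)
  set N' := superposition hg pastState (w'.1, pastOrbit A B hg w')
  have hN : ‖N - N'‖ ≤ c τ * ‖w - w'‖ :=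
    (norm_superposition_sub_le hg norm_pastState_le_one hw hw').trans <|
      mul_le_mul_of_nonneg_left
        (max_le (norm_fst_le (w - w')) (norm_pastOrbit_sub_le hg hτ hw hw')) (hg.nonneg τ)
  have hb : ‖b - b'‖ ≤ ‖B‖ * ‖b - b'‖ + c τ * ‖w - w'‖ := calc
    ‖b - b'‖ = ‖B.compLeftContinuousBounded ℕ (shiftCLM (b - b')) +
        (ContinuousLinearMap.snd ℝ E F).compLeftContinuousBounded ℕ (N - N')‖ := by
      rw [map_sub, map_sub, map_sub, ← add_sub_add_comm]
      exact congrArg norm (congrArg₂ _ (pastOrbit_snd_eq hg hτ hw) (pastOrbit_snd_eq hg hτ hw'))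
    _ ≤ ‖B‖ * ‖b - b'‖ + ‖N - N'‖ := norm_comp_shiftCLM_add_snd_le ..
    _ ≤ ‖B‖ * ‖b - b'‖ + c τ * ‖w - w'‖ := by gcongr
  refine ((b - b').norm_coe_le_norm 0).trans ?_
  rw [mul_assoc, le_inv_mul_iff₀ (hg.one_sub_norm_pos hτ)]
  linarith

theorem norm_deriv_unstableGraph_le (hg : IsDecayingPerturbation c g) {t : ℝ}
    (ht : contractionRate A B (c t) < 1) (u : E) :
    ‖deriv (fun s => unstableGraph A B hg (s, u)) t‖ ≤ (1 - ‖B‖)⁻¹ * c t := by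
  rw [norm_deriv_eq_norm_fderiv]
  refine norm_fderiv_le_of_lip' ℝ
    (mul_nonneg (inv_nonneg.2 (hg.one_sub_norm_pos ht).le) (hg.nonneg t)) ?_
  -- Earlier times `s` near `t` still get the weight `c t`, as their histories start at `s + 1`.
  filter_upwards [lt_mem_nhds (sub_one_lt t)] with s hs
  simpa using norm_unstableGraph_sub_le hg ht (w := (s, u)) (w' := (t, u))
    (sub_lt_iff_lt_add.1 hs).le (lt_add_one t).le

theorem norm_fderiv_unstableGraph_le (hg : IsDecayingPerturbation c g) {t : ℝ}
    (ht : contractionRate A B (c t) < 1) (u : E) :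
    ‖fderiv ℝ (fun v => unstableGraph A B hg (t, v)) u‖ ≤ (1 - ‖B‖)⁻¹ * c t :=
  norm_fderiv_le_of_lip' ℝ
    (mul_nonneg (inv_nonneg.2 (hg.one_sub_norm_pos ht).le) (hg.nonneg t)) <|
    .of_forall fun v => by
      simpa using norm_unstableGraph_sub_le hg ht (w := (t, v)) (w' := (t, u))
        (lt_add_one t).le (lt_add_one t).le

end Complete

end LyapunovPerron

section InvariantGraph

theorem exists_preimage_sequence {α : Type*} {f : α → α} {S : Set α} (hS : S ⊆ f '' S) {w : α}
    (hw : w ∈ S) : ∃ z : ℕ → α, z 0 = w ∧ ∀ n, z n ∈ S ∧ f (z (n + 1)) = z n := by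
  choose! pre hmem hpre using hS
  have hz (n : ℕ) : pre^[n] w ∈ S := by
    induction n with
    | zero => exact hw
    | succ n ih => exact iterate_succ_apply' pre n w ▸ hmem ih
  exact ⟨fun n => pre^[n] w, rfl, fun n =>
    ⟨hz n, (congrArg f (iterate_succ_apply' pre n w)).trans (hpre (hz n))⟩⟩

theorem le_max_of_succ_le_mul_add {a : ℕ → ℝ} {l ε : ℝ} (hl0 : 0 ≤ l) (hl1 : l < 1)
    (ha : ∀ n, a (n + 1) ≤ l * (a n + ε)) (n : ℕ) : a n ≤ max (a 0) (l * ε / (1 - l)) := by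
  induction n with
  | zero => exact le_max_left ..
  | succ n ih =>
    set M := max (a 0) (l * ε / (1 - l))
    have hM : l * ε ≤ M * (1 - l) := (div_le_iff₀ (sub_pos.2 hl1)).1 (le_max_right ..)
    calc a (n + 1) ≤ l * (a n + ε) := ha n
      _ ≤ l * (M + ε) := by gcongr
      _ ≤ M := by linarith

variable {E F : Type*} [NormedAddCommGroup E] [NormedSpace ℝ E] [NormedAddCommGroup F]
  [NormedSpace ℝ F] {A : E ≃L[ℝ] E} {B : F →L[ℝ] F} {c : ℝ → ℝ} {g : ℝ × (E × F) → E × F}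

/-- The part of the graph of `σ` over the times after `t₁`, as a subset of the phase space. -/
def graphAfter (t₁ : ℝ) (σ : ℝ × E → F) : Set (ℝ × E × F) :=
  {w | t₁ < w.1 ∧ w.2.2 = σ (w.1, w.2.1)}

theorem isBoundedBackwardOrbit_of_norm_snd_le (hg : IsDecayingPerturbation c g)
    (hA : ‖(A.symm : E →L[ℝ] E)‖ < 1) {t K : ℝ} {x : ℕ → E × F}
    (hx : ∀ n : ℕ, x n = timeStep A B g (t + n + 1) (x (n + 1))) (hK : ∀ n, ‖(x n).2‖ ≤ K) :
    IsBoundedBackwardOrbit A B g t x := by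
  have hstep (n : ℕ) : ‖(x (n + 1)).1‖ ≤ ‖(A.symm : E →L[ℝ] E)‖ * (‖(x n).1‖ + c t) := by
    set r := g (t + n + 1, x (n + 1))
    have hr : ‖r.1‖ ≤ c t := (norm_fst_le r).trans <| (hg.norm_le _).trans <|
      hg.antitone (by linarith [n.cast_nonneg (α := ℝ)])
    have hsymm : (x (n + 1)).1 = A.symm ((x n).1 - r.1) := by
      rw [A.eq_symm_apply, eq_sub_iff_add_eq, hx n]
      rfl
    rw [hsymm]
    exact (A.symm : E →L[ℝ] E).le_opNorm_of_le (norm_sub_le_of_le le_rfl hr)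
  have hfst := le_max_of_succ_le_mul_add (a := fun n => ‖(x n).1‖) (norm_nonneg _) hA hstep
  exact ⟨isBounded_iff_forall_norm_le.2 ⟨_, forall_mem_range.2 fun n =>
    max_le_max (hfst n) (hK n)⟩, hx⟩

variable [CompleteSpace E] [CompleteSpace F]

theorem mem_graphAfter_unstableGraph_iff (hg : IsDecayingPerturbation c g) {t₁ : ℝ}
    (ht₁ : contractionRate A B (c t₁) < 1) {w : ℝ × E × F} :
    w ∈ graphAfter t₁ (unstableGraph A B hg) ↔
      t₁ < w.1 ∧ ∃ x, IsBoundedBackwardOrbit A B g w.1 x ∧ x 0 = w.2 :=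
  and_congr_right fun hw => eq_unstableGraph_iff hg ht₁ (by linarith)

theorem modelMap_image_graphAfter_unstableGraph (hg : IsDecayingPerturbation c g) {t₁ : ℝ}
    (ht₁ : contractionRate A B (c t₁) < 1) :
    modelMap A B g '' graphAfter (t₁ + 1) (unstableGraph A B hg) =
      graphAfter t₁ (unstableGraph A B hg) := by
  have ht₁' : contractionRate A B (c (t₁ + 1)) < 1 :=
    (contractionRate_mono (hg.antitone (lt_add_one t₁).le)).trans_lt ht₁
  refine Subset.antisymm (image_subset_iff.2 fun w hw => ?_) fun w hw => ?_
  · obtain ⟨ht, x, hx, hx0⟩ := (mem_graphAfter_unstableGraph_iff hg ht₁').1 hw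
    refine (mem_graphAfter_unstableGraph_iff hg ht₁).2 ⟨lt_sub_iff_add_lt.2 ht, _,
      IsBoundedBackwardOrbit.cons (x := x) ?_, ?_⟩
    · simpa [modelMap] using hx
    · simp [modelMap, consSeq, hx0]
  · obtain ⟨ht, x, hx, hx0⟩ := (mem_graphAfter_unstableGraph_iff hg ht₁).1 hw
    refine ⟨(w.1 + 1, x 1), (mem_graphAfter_unstableGraph_iff hg ht₁').2
      ⟨add_lt_add_left ht 1, _, hx.tail, rfl⟩, Prod.ext (add_sub_cancel_right _ _) ?_⟩
    rw [← hx0, hx.eq_timeStep 0]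
    simp [modelMap]

theorem eq_unstableGraph_of_graphAfter_subset (hg : IsDecayingPerturbation c g)
    (hA : ‖(A.symm : E →L[ℝ] E)‖ < 1) {t₁ : ℝ} (ht₁ : contractionRate A B (c t₁) < 1) {K : ℝ}
    {σ : ℝ × E → F} (hσ : ∀ t u, t₁ < t → ‖σ (t, u)‖ ≤ K)
    (hinv : graphAfter t₁ σ ⊆ modelMap A B g '' graphAfter (t₁ + 1) σ) {t : ℝ} (u : E)
    (ht : t₁ < t) : σ (t, u) = unstableGraph A B hg (t, u) := by
  have hsub : graphAfter (t₁ + 1) σ ⊆ graphAfter t₁ σ := fun w hw =>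
    ⟨(lt_add_one t₁).trans hw.1, hw.2⟩
  obtain ⟨z, hz0, hz⟩ := exists_preimage_sequence (hinv.trans (image_mono hsub))
    (w := (t, u, σ (t, u))) ⟨ht, rfl⟩
  have htime (n : ℕ) : (z n).1 = t + n := by
    induction n with
    | zero => simp [hz0]
    | succ n ih =>
      have := congrArg Prod.fst (hz n).2
      simp only [modelMap, ih] at this
      push_cast
      linarith
  have horbit (n : ℕ) : (z n).2 = timeStep A B g (t + n + 1) (z (n + 1)).2 := by
    rw [← congrArg Prod.snd (hz n).2, modelMap, htime, Nat.cast_succ, add_assoc]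
  refine (eq_unstableGraph_iff hg ht₁ (by linarith)).2 ⟨fun n => (z n).2,
    isBoundedBackwardOrbit_of_norm_snd_le hg hA horbit (K := K) fun n => ?_, by simp only [hz0]⟩
  rw [(hz n).1.2]
  exact hσ _ _ (hz n).1.1

end InvariantGraph

theorem euclidean_model_unstable_manifold_C1_general {E F : Type*} [NormedAddCommGroup E]
    [NormedSpace ℝ E] [CompleteSpace E] [NormedAddCommGroup F] [NormedSpace ℝ F] [CompleteSpace F]
    {A : E ≃L[ℝ] E} (hA : ‖(A.symm : E →L[ℝ] E)‖ < 1) {B : F →L[ℝ] F} (hB : ‖B‖ < 1)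
    {c : ℝ → ℝ} {g : ℝ × (E × F) → E × F} (hg : IsDecayingPerturbation c g) :
    ∃ (t₁ C : ℝ) (σ : ℝ × E → F),
      0 ≤ C ∧
      (∀ t u, t₁ < t → ‖σ (t, u)‖ ≤ C * c t) ∧
      (∀ t u u', t₁ < t → ‖σ (t, u) - σ (t, u')‖ ≤ C * c t * ‖u - u'‖) ∧
      modelMap A B g '' graphAfter (t₁ + 1) σ = graphAfter t₁ σ ∧
      (∀ (K : ℝ) (σ' : ℝ × E → F), (∀ t u, t₁ < t → ‖σ' (t, u)‖ ≤ K) →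
        graphAfter t₁ σ' ⊆ modelMap A B g '' graphAfter (t₁ + 1) σ' →
        ∀ t u, t₁ < t → σ' (t, u) = σ (t, u)) ∧
      ContDiffOn ℝ 1 σ {w | t₁ < w.1} ∧
      (∀ t u, t₁ < t → ‖deriv (fun s => σ (s, u)) t‖ ≤ C * c t) ∧
      (∀ t u, t₁ < t → ‖fderiv ℝ (fun v => σ (t, v)) u‖ ≤ C * c t) := by
  obtain ⟨t₁, ht₁⟩ := ((tendsto_contractionRate hg).eventually_lt_const (max_lt hA hB)).exists
  have hrate {t : ℝ} (ht : t₁ < t) : contractionRate A B (c t) < 1 :=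
    (contractionRate_mono (hg.antitone ht.le)).trans_lt ht₁
  refine ⟨t₁, (1 - ‖B‖)⁻¹, unstableGraph A B hg, inv_nonneg.2 (sub_pos.2 hB).le,
    fun t u ht => norm_unstableGraph_le hg (hrate ht) (lt_add_one t).le, fun t u u' ht => ?_,
    modelMap_image_graphAfter_unstableGraph hg ht₁,
    fun K σ' hσ' hinv t u ht => eq_unstableGraph_of_graphAfter_subset hg hA ht₁ hσ' hinv u ht,
    fun w hw => (contDiffAt_unstableGraph hg (hrate hw) (lt_add_one w.1)).contDiffWithinAt,
    fun t u ht => norm_deriv_unstableGraph_le hg (hrate ht) u,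
    fun t u ht => norm_fderiv_unstableGraph_le hg (hrate ht) u⟩
  simpa using norm_unstableGraph_sub_le hg (hrate ht) (w := (t, u)) (w' := (t, u'))
    (lt_add_one t).le (lt_add_one t).le

/-- C¹ regularity of the Euclidean-model unstable graph: if the perturbation is
continuously differentiable with derivative bounded by `C̃ * ρ t`, then the
unique invariant graph map is continuously differentiable with partial
derivatives bounded by `C * ρ t`. -/
theorem euclidean_model_unstable_manifold_C1
    (p q : ℕ) (hp : 1 ≤ p) (hq : 1 ≤ q)
    (lam kap : ℝ) (hlam : 1 < lam) (hkap0 : 0 ≤ kap) (hkap1 : kap < 1)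
    (A : EuclideanSpace ℝ (Fin p) ≃L[ℝ] EuclideanSpace ℝ (Fin p))
    (hA : ‖(A.symm : EuclideanSpace ℝ (Fin p) →L[ℝ] EuclideanSpace ℝ (Fin p))‖ ≤ lam⁻¹)
    (B : EuclideanSpace ℝ (Fin q) →L[ℝ] EuclideanSpace ℝ (Fin q))
    (hB : ‖B‖ ≤ kap)
    (ρ : ℝ → ℝ) (hρpos : ∀ t, 0 < ρ t) (hρanti : Antitone ρ)
    (hρ0 : Filter.Tendsto ρ Filter.atTop (nhds 0))
    (Ct : ℝ) (hCt : 0 ≤ Ct)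
    (g : ℝ × (EuclideanSpace ℝ (Fin p) × EuclideanSpace ℝ (Fin q)) →
      EuclideanSpace ℝ (Fin p) × EuclideanSpace ℝ (Fin q))
    (hgbdd : ∀ t v, ‖g (t, v)‖ ≤ Ct * ρ t)
    (hgLip : ∀ t v v', ‖g (t, v) - g (t, v')‖ ≤ Ct * ρ t * ‖v - v'‖)
    (hgC1 : ContDiff ℝ 1 g)
    (hgD : ∀ z, ‖fderiv ℝ g z‖ ≤ Ct * ρ z.1)
    (f : ℝ × EuclideanSpace ℝ (Fin p) × EuclideanSpace ℝ (Fin q) →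
      ℝ × EuclideanSpace ℝ (Fin p) × EuclideanSpace ℝ (Fin q))
    (hf : ∀ t u s,
      f (t, u, s) = (t - 1, A u + (g (t, (u, s))).1, B s + (g (t, (u, s))).2)) :
    ∃ (t₁ C : ℝ) (σ : ℝ × EuclideanSpace ℝ (Fin p) → EuclideanSpace ℝ (Fin q)),
      0 ≤ C ∧
      (∀ t u, t₁ < t → ‖σ (t, u)‖ ≤ C * ρ t) ∧
      (∀ t u u', t₁ < t → ‖σ (t, u) - σ (t, u')‖ ≤ C * ρ t * ‖u - u'‖) ∧
      (f '' {w : ℝ × EuclideanSpace ℝ (Fin p) × EuclideanSpace ℝ (Fin q) |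
          t₁ + 1 < w.1 ∧ w.2.2 = σ (w.1, w.2.1)} =
        {w : ℝ × EuclideanSpace ℝ (Fin p) × EuclideanSpace ℝ (Fin q) |
          t₁ < w.1 ∧ w.2.2 = σ (w.1, w.2.1)}) ∧
      (∀ (C' : ℝ) (σ' : ℝ × EuclideanSpace ℝ (Fin p) → EuclideanSpace ℝ (Fin q)),
        0 ≤ C' →
        (∀ t u, t₁ < t → ‖σ' (t, u)‖ ≤ C' * ρ t) →
        (∀ t u u', t₁ < t → ‖σ' (t, u) - σ' (t, u')‖ ≤ C' * ρ t * ‖u - u'‖) →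
        (f '' {w : ℝ × EuclideanSpace ℝ (Fin p) × EuclideanSpace ℝ (Fin q) |
            t₁ + 1 < w.1 ∧ w.2.2 = σ' (w.1, w.2.1)} =
          {w : ℝ × EuclideanSpace ℝ (Fin p) × EuclideanSpace ℝ (Fin q) |
            t₁ < w.1 ∧ w.2.2 = σ' (w.1, w.2.1)}) →
        ∀ t u, t₁ < t → σ' (t, u) = σ (t, u)) ∧
      ContDiffOn ℝ 1 σ {w : ℝ × EuclideanSpace ℝ (Fin p) | t₁ < w.1} ∧
      (∀ t u, t₁ < t → ‖deriv (fun s : ℝ => σ (s, u)) t‖ ≤ C * ρ t) ∧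
      (∀ t u, t₁ < t →
        ‖fderiv ℝ (fun v : EuclideanSpace ℝ (Fin p) => σ (t, v)) u‖ ≤ C * ρ t) := by
  have hg : IsDecayingPerturbation (fun t => Ct * ρ t) g :=
    ⟨hρanti.const_mul hCt, by simpa using hρ0.const_mul Ct, hgC1, fun z => hgbdd z.1 z.2, hgD⟩
  obtain rfl : f = modelMap A B g := funext fun w => hf w.1 w.2.1 w.2.2
  obtain ⟨t₁, C, σ, hC, hσ, hσLip, hinv, huniq, hsmooth, hderiv, hfderiv⟩ :=
    euclidean_model_unstable_manifold_C1_general (hA.trans_lt (inv_lt_one_of_one_lt₀ hlam))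
      (hB.trans_lt hkap1) hg
  simp only [← mul_assoc C Ct] at hσ hσLip hderiv hfderiv
  refine ⟨t₁, C * Ct, σ, mul_nonneg hC hCt, hσ, hσLip, hinv, fun C' σ' hC' hσ' _ hinv' => ?_,
    hsmooth, hderiv, hfderiv⟩
  exact huniq (C' * ρ t₁) σ' (fun t u ht => (hσ' t u ht).trans
    (mul_le_mul_of_nonneg_left (hρanti ht.le) hC')) hinv'.ge
end

section
/- Existence of the commutant for the quantitative propagation estimate: For all T₁ > 0, T₂ > 0 and δ₀ > 0 there exist infinitely differentiable functions ã₁, ã₂, b̃, ẽ: ℝ → ℝ such that, setting ã := ã₁² + ã₂²: (i) 0 ≤ ã ≤ 1 and the support of ã is contained in [−T₁, T₂+δ₀]; (ii) 0 ≤ ã₁ ≤ 1 and the support of ã₁ is contained in [−T₁, 0) (so ã₂² = ã on [0, T₂+δ₀]); (iii) the derivative identity ã'(x) = −b̃(x)² − (1/(4T₂))·ã₂(x)² + ẽ(x) holds for all x ∈ ℝ; (iv) b̃(x) ≥ 1/(2√T₂) for all x ∈ [0, T₂]; (v) ẽ ≥ 0, the support of ẽ is contained in [−T₁, 0], and ẽ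 ≤ 2/T₁ everywhere. -/
/-!
Let `S = Real.smoothTransition`. Take `ã(x) = S(x/T₁ + 1) D(x)²`, where `D` decays exponentially at
rate `5/(8T₂)` from a little before `0` on, and falls to zero flatly at `T₂ + δ₀`. The rising
factor contributes `ẽ = S'(x/T₁ + 1) D²/T₁`, which is at most `2/T₁` because `S' ≤ 2`: in terms of
`u = 1/x` and `v = 1/(1 - x)`, which satisfy `u + v = uv ≥ 4`, the derivative is
`S'(x) = (u² + v²) / (4 cosh² ((u - v)/2))`, and `u² + v² ≤ 8 (1 + ((u - v)/2)²)`. Of the decay rate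
`5/(4T₂)` of `D²`, a share `1/(4T₂)` is spent on `ã₂²`, leaving `b̃² ≥ D²/T₂` on `[0, T₂]`, and
`D ≥ 1/2` there because `D` is close to `exp (-5x/(8T₂))` and `5/8 < log 2`. The choice of rate is
the best one: `r = 5/4` maximizes `(r - 1/4) exp (-r)`.
-/

section SmoothTransition

open Real
open scoped ContDiff

lemma expNegInvGlue_eq_exp {x : ℝ} (hx : 0 < x) : expNegInvGlue x = exp (-x⁻¹) := by
  rw [expNegInvGlue, if_neg hx.not_ge]

lemma expNegInvGlue_le_one (x : ℝ) : expNegInvGlue x ≤ 1 := by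
  rcases le_or_gt x 0 with hx | hx
  · simp [expNegInvGlue.zero_of_nonpos hx]
  · simpa [expNegInvGlue_eq_exp hx] using hx.le

lemma hasDerivAt_expNegInvGlue (x : ℝ) :
    HasDerivAt expNegInvGlue (expNegInvGlue x / x ^ 2) x := by
  simpa [div_eq_inv_mul] using expNegInvGlue.hasDerivAt_polynomial_eval_inv_mul 1 x

lemma contDiff_inv_mul_expNegInvGlue {n : ℕ∞} :
    ContDiff ℝ n fun x : ℝ => x⁻¹ * expNegInvGlue x := by
  simpa using expNegInvGlue.contDiff_polynomial_eval_inv_mul (n := n) Polynomial.X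

lemma sqrt_expNegInvGlue (x : ℝ) : √(expNegInvGlue x) = expNegInvGlue (2 * x) := by
  rcases le_or_gt x 0 with hx | hx
  · rw [expNegInvGlue.zero_of_nonpos hx, expNegInvGlue.zero_of_nonpos (by linarith), sqrt_zero]
  · rw [expNegInvGlue_eq_exp hx, expNegInvGlue_eq_exp (by positivity), ← exp_half]
    congr 1
    field_simp

lemma contDiff_sqrt_smoothTransition {n : ℕ∞} :
    ContDiff ℝ n fun x => √(smoothTransition x) := by
  have hquot : (fun x => √(smoothTransition x)) = fun x =>
      expNegInvGlue (2 * x) / √(expNegInvGlue x + expNegInvGlue (1 - x)) := by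
    funext x
    rw [smoothTransition, sqrt_div (expNegInvGlue.nonneg x), sqrt_expNegInvGlue]
  rw [hquot]
  have hpos := smoothTransition.pos_denom
  exact ContDiff.div (by fun_prop) (ContDiff.sqrt (by fun_prop) fun x => (hpos x).ne')
    fun x => (sqrt_pos.2 (hpos x)).ne'

lemma one_sub_smoothTransition (x : ℝ) :
    1 - smoothTransition x = smoothTransition (1 - x) := by
  have hpos := smoothTransition.pos_denom x
  rw [smoothTransition, smoothTransition, sub_sub_cancel, add_comm (expNegInvGlue (1 - x))]
  field_simp
  ring

lemma hasDerivAt_smoothTransition (x : ℝ) :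
    HasDerivAt smoothTransition
      (smoothTransition x * smoothTransition (1 - x) * (1 / x ^ 2 + 1 / (1 - x) ^ 2)) x := by
  have hpos := smoothTransition.pos_denom x
  have hf := hasDerivAt_expNegInvGlue x
  have hg := (hasDerivAt_expNegInvGlue (1 - x)).comp x ((hasDerivAt_id x).const_sub 1)
  convert! hf.div (hf.add hg) hpos.ne' using 1
  simp only [smoothTransition, sub_sub_cancel, Pi.add_apply, Function.comp_apply,
    add_comm (expNegInvGlue (1 - x))]
  field_simp
  ring

lemma support_deriv_smoothTransition_subset :
    Function.support (deriv smoothTransition) ⊆ Set.Ioo 0 1 := by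
  intro x hx
  rw [Function.mem_support, (hasDerivAt_smoothTransition x).deriv] at hx
  have hfactors := mul_ne_zero_iff.1 (mul_ne_zero_iff.1 hx).1
  simp only [ne_eq, smoothTransition.zero_iff_nonpos, not_le, sub_pos] at hfactors
  exact hfactors

lemma deriv_smoothTransition_nonneg (x : ℝ) : 0 ≤ deriv smoothTransition x :=
  smoothTransition.monotone.deriv_nonneg

lemma one_add_sq_le_cosh_sq (t : ℝ) : 1 + t ^ 2 ≤ cosh t ^ 2 := by
  have hsinh : |t| ≤ |sinh t| := by
    rw [abs_sinh]
    exact self_le_sinh_iff.2 (abs_nonneg t)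
  linarith [cosh_sq t, sq_le_sq.2 hsinh]

lemma exp_neg_add_exp_neg_sq (u v : ℝ) :
    (exp (-u) + exp (-v)) ^ 2 = 4 * (exp (-u) * exp (-v)) * cosh ((u - v) / 2) ^ 2 := by
  have hmean : exp (-u) * exp (-v) = exp (-((u + v) / 2)) ^ 2 := by
    rw [← exp_add, ← exp_nat_mul]
    congr 1
    push_cast
    ring
  have hsum : exp (-u) + exp (-v) = 2 * exp (-((u + v) / 2)) * cosh ((u - v) / 2) := by
    rw [cosh_eq, mul_div_assoc', mul_assoc, mul_add, ← exp_add, ← exp_add]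
    ring_nf
  rw [hmean, hsum]
  ring

lemma sq_add_sq_le_cosh_sq {u v : ℝ} (hu : 0 < u) (hv : 0 < v) (huv : u + v = u * v) :
    u ^ 2 + v ^ 2 ≤ 8 * cosh ((u - v) / 2) ^ 2 := by
  have hsum : 4 ≤ u + v := by nlinarith [sq_nonneg (u - v), add_pos hu hv]
  calc u ^ 2 + v ^ 2 = 8 * (1 + ((u - v) / 2) ^ 2) - (u + v - 2) * (u + v - 4) := by
        linear_combination -6 * huv
    _ ≤ 8 * (1 + ((u - v) / 2) ^ 2) :=
        sub_le_self _ (mul_nonneg (by linarith) (by linarith))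
    _ ≤ 8 * cosh ((u - v) / 2) ^ 2 := by gcongr; exact one_add_sq_le_cosh_sq _

/-- The bound is attained at `x = 1 / 2`. -/
lemma deriv_smoothTransition_le_two (x : ℝ) : deriv smoothTransition x ≤ 2 := by
  by_cases hx : x ∈ Set.Ioo 0 1
  swap
  · rw [Function.notMem_support.1 fun h => hx (support_deriv_smoothTransition_subset h)]
    norm_num
  obtain ⟨hx0, hx1⟩ := hx
  have hx1' : 0 < 1 - x := sub_pos.2 hx1
  set u := x⁻¹ with hu
  set v := (1 - x)⁻¹ with hv
  have hsum_eq_prod : u + v = u * v := by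
    rw [hu, hv]
    field_simp
    ring
  have hsq := sq_add_sq_le_cosh_sq (inv_pos.2 hx0) (inv_pos.2 hx1') hsum_eq_prod
  have hexp : 0 < exp (-u) * exp (-v) := by positivity
  calc deriv smoothTransition x
      = exp (-u) * exp (-v) * (u ^ 2 + v ^ 2) / (exp (-u) + exp (-v)) ^ 2 := by
        rw [(hasDerivAt_smoothTransition x).deriv, smoothTransition, smoothTransition,
          sub_sub_cancel, expNegInvGlue_eq_exp hx0, expNegInvGlue_eq_exp hx1', ← hu, ← hv,
          one_div, one_div, ← inv_pow, ← inv_pow, ← hu, ← hv, add_comm (exp (-v))]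
        field_simp
    _ ≤ 2 := by
        rw [div_le_iff₀ (by positivity), exp_neg_add_exp_neg_sq]
        nlinarith

/-- A smooth version of the positive part `max x 0`: the primitive of the smooth step. -/
noncomputable def smoothPosPart (x : ℝ) : ℝ := ∫ t in 0..x, smoothTransition t

lemma hasDerivAt_smoothPosPart (x : ℝ) : HasDerivAt smoothPosPart (smoothTransition x) x :=
  (smoothTransition.continuous.integral_hasStrictDerivAt 0 x).hasDerivAt

lemma contDiff_smoothPosPart : ContDiff ℝ ∞ smoothPosPart := by
  have hderiv : deriv smoothPosPart = smoothTransition :=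
    funext fun x => (hasDerivAt_smoothPosPart x).deriv
  rw [contDiff_infty_iff_deriv, hderiv]
  exact ⟨fun x => (hasDerivAt_smoothPosPart x).differentiableAt, smoothTransition.contDiff⟩

lemma smoothPosPart_of_nonpos {x : ℝ} (hx : x ≤ 0) : smoothPosPart x = 0 := by
  refine intervalIntegral.integral_zero_ae (Filter.Eventually.of_forall fun t ht => ?_)
  rw [Set.uIoc_of_ge hx] at ht
  exact smoothTransition.zero_of_nonpos ht.2

lemma smoothPosPart_nonneg (x : ℝ) : 0 ≤ smoothPosPart x := by
  rcases le_total x 0 with hx | hx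
  · rw [smoothPosPart_of_nonpos hx]
  · exact intervalIntegral.integral_nonneg hx fun t _ => smoothTransition.nonneg t

lemma smoothPosPart_le_max (x : ℝ) : smoothPosPart x ≤ max x 0 := by
  rcases le_total x 0 with hx | hx
  · exact (smoothPosPart_of_nonpos hx).trans_le (le_max_right x 0)
  · calc smoothPosPart x ≤ ∫ _ in 0..x, (1 : ℝ) :=
          intervalIntegral.integral_mono_on hx (smoothTransition.continuous.intervalIntegrable 0 x)
            intervalIntegrable_const fun t _ => smoothTransition.le_one t
      _ = x := by simp
      _ ≤ max x 0 := le_max_left x 0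

end SmoothTransition

section Decay

open Real
open scoped ContDiff

variable {T δ x : ℝ}

/-- The fraction of `ã` carried by `ã₂²`: it rises from `0` to `1` on `[-T / 25, 0]`. -/
noncomputable def onset (T x : ℝ) : ℝ := smoothTransition (25 * x / T + 1)

/-- The exponential factor `exp (-5 H / (8 T))` of `decay`, where
`H = T / 25 * smoothPosPart (25 x / T + 1)` is the primitive of `onset T`. -/
noncomputable def damping (T x : ℝ) : ℝ := exp (-(smoothPosPart (25 * x / T + 1) / 40))

/-- The distance from `x` to the end `T + δ` of the support, in units of `δ / 25`. -/
noncomputable def endGap (T δ x : ℝ) : ℝ := 25 * (T + δ - x) / δ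

/-- The square root of the decreasing factor of the commutant. -/
noncomputable def decay (T δ x : ℝ) : ℝ := damping T x * expNegInvGlue (endGap T δ x)

/-- A smooth square root of the part of `-(decay²)'` which is left after `onset * decay² / (4 T)`
has been taken away. The factor `endGap⁻¹` stands outside the square root to keep the radicand
positive, hence the root smooth, up to and beyond the end of the support. -/
noncomputable def lossRoot (T δ x : ℝ) : ℝ :=
  damping T x * ((endGap T δ x)⁻¹ * expNegInvGlue (endGap T δ x)) *
    √(onset T x * endGap T δ x ^ 2 / T + 50 / δ)

lemma onset_of_nonneg (hT : 0 < T) (hx : 0 ≤ x) : onset T x = 1 :=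
  smoothTransition.one_of_one_le (le_add_of_nonneg_left (by positivity))

lemma one_sub_onset (T x : ℝ) : 1 - onset T x = smoothTransition (-(25 * x / T)) := by
  rw [onset, one_sub_smoothTransition, sub_add_cancel_right]

lemma contDiff_damping : ContDiff ℝ ∞ (damping T) :=
  ((contDiff_smoothPosPart.comp (by fun_prop)).div_const 40).neg.exp

lemma damping_le_one (T x : ℝ) : damping T x ≤ 1 :=
  exp_le_one_iff.2 (neg_nonpos.2 (div_nonneg (smoothPosPart_nonneg _) (by norm_num)))

lemma hasDerivAt_damping (T x : ℝ) :
    HasDerivAt (damping T) (-(damping T x * (5 / (8 * T) * onset T x))) x := by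
  have harg : HasDerivAt (fun y => 25 * y / T + 1) (25 / T) x := by
    simpa using (((hasDerivAt_id x).const_mul 25).div_const T).add_const 1
  convert! (((hasDerivAt_smoothPosPart _).comp x harg).div_const 40).neg.exp using 1
  simp only [damping, onset, Function.comp_apply, Pi.neg_apply]
  ring

lemma contDiff_endGap : ContDiff ℝ ∞ (endGap T δ) := by
  unfold endGap
  fun_prop

lemma endGap_pos (hδ : 0 < δ) (hx : x < T + δ) : 0 < endGap T δ x :=
  div_pos (by linarith) hδ

lemma endGap_nonpos (hδ : 0 < δ) (hx : T + δ ≤ x) : endGap T δ x ≤ 0 :=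
  div_nonpos_of_nonpos_of_nonneg (by linarith) hδ.le

lemma hasDerivAt_endGap (T δ x : ℝ) : HasDerivAt (endGap T δ) (-(25 / δ)) x := by
  unfold endGap
  simpa [neg_div] using (((hasDerivAt_id x).const_sub (T + δ)).const_mul 25).div_const δ

lemma contDiff_decay : ContDiff ℝ ∞ (decay T δ) :=
  contDiff_damping.mul (expNegInvGlue.contDiff.comp contDiff_endGap)

lemma decay_nonneg (T δ x : ℝ) : 0 ≤ decay T δ x :=
  mul_nonneg (exp_pos _).le (expNegInvGlue.nonneg _)

lemma decay_le_one (T δ x : ℝ) : decay T δ x ≤ 1 :=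
  mul_le_one₀ (damping_le_one T x) (expNegInvGlue.nonneg _) (expNegInvGlue_le_one _)

lemma decay_eq_zero (h : endGap T δ x ≤ 0) : decay T δ x = 0 := by
  rw [decay, expNegInvGlue.zero_of_nonpos h, mul_zero]

lemma half_le_decay (hT : 0 < T) (hδ : 0 < δ) (hx : x ≤ T) : 1 / 2 ≤ decay T δ x := by
  have hramp : smoothPosPart (25 * x / T + 1) ≤ 26 := by
    refine (smoothPosPart_le_max _).trans (max_le ?_ (by norm_num))
    have : 25 * x / T ≤ 25 := (div_le_iff₀ hT).2 (by linarith)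
    linarith
  have hgap : 25 ≤ endGap T δ x := (le_div_iff₀ hδ).2 (by linarith)
  have hgap_inv : (endGap T δ x)⁻¹ ≤ 1 / 25 := by
    rw [one_div]
    gcongr
  calc (1 : ℝ) / 2 = exp (-log 2) := by rw [exp_neg, exp_log two_pos, one_div]
    _ ≤ exp (-(smoothPosPart (25 * x / T + 1) / 40) + -(endGap T δ x)⁻¹) := by
        gcongr
        linarith [log_two_gt_d9]
    _ = decay T δ x := by
        rw [exp_add, decay, damping, expNegInvGlue_eq_exp (by linarith)]

lemma hasDerivAt_decay (T δ x : ℝ) :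
    HasDerivAt (decay T δ)
      (-(decay T δ x * (5 / (8 * T) * onset T x + 25 / (δ * endGap T δ x ^ 2)))) x := by
  convert! (hasDerivAt_damping T x).mul
    ((hasDerivAt_expNegInvGlue _).comp x (hasDerivAt_endGap T δ x)) using 1
  simp only [decay, Function.comp_apply]
  ring

lemma lossRoot_radicand_pos (hT : 0 < T) (hδ : 0 < δ) (x : ℝ) :
    0 < onset T x * endGap T δ x ^ 2 / T + 50 / δ := by
  have : 0 ≤ onset T x := smoothTransition.nonneg _
  positivity

lemma contDiff_lossRoot (hT : 0 < T) (hδ : 0 < δ) : ContDiff ℝ ∞ (lossRoot T δ) := by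
  have honset : ContDiff ℝ ∞ (onset T) := smoothTransition.contDiff.comp (by fun_prop)
  have hroot := ContDiff.sqrt
    (((honset.mul (contDiff_endGap.pow 2)).div_const T).add contDiff_const)
    fun x => (lossRoot_radicand_pos hT hδ x).ne'
  exact (contDiff_damping.mul (contDiff_inv_mul_expNegInvGlue.comp contDiff_endGap)).mul hroot

lemma lossRoot_nonneg (h : 0 ≤ endGap T δ x) : 0 ≤ lossRoot T δ x :=
  mul_nonneg (mul_nonneg (exp_pos _).le (mul_nonneg (inv_nonneg.2 h) (expNegInvGlue.nonneg _)))
    (sqrt_nonneg _)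

lemma lossRoot_sq (hT : 0 < T) (hδ : 0 < δ) (x : ℝ) :
    lossRoot T δ x ^ 2 =
      decay T δ x ^ 2 * (onset T x / T + 50 / (δ * endGap T δ x ^ 2)) := by
  rw [lossRoot, mul_pow, sq_sqrt (lossRoot_radicand_pos hT hδ x).le]
  rcases le_or_gt (endGap T δ x) 0 with hgap | hgap
  · simp [decay_eq_zero hgap, expNegInvGlue.zero_of_nonpos hgap]
  · rw [decay]
    field_simp

lemma hasDerivAt_decay_sq (hT : 0 < T) (hδ : 0 < δ) (x : ℝ) :
    HasDerivAt (fun y => decay T δ y ^ 2)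
      (-lossRoot T δ x ^ 2 - 1 / (4 * T) * (onset T x * decay T δ x ^ 2)) x := by
  convert! (hasDerivAt_decay T δ x).pow 2 using 1
  rw [lossRoot_sq hT hδ]
  push_cast
  ring

lemma le_lossRoot (hT : 0 < T) (hδ : 0 < δ) (hx : x ∈ Set.Icc 0 T) :
    1 / (2 * √T) ≤ lossRoot T δ x := by
  have hgap : 0 < endGap T δ x := endGap_pos hδ (by linarith [hx.2])
  refine (sq_le_sq₀ (by positivity) (lossRoot_nonneg hgap.le)).1 ?_
  calc (1 / (2 * √T)) ^ 2 = (1 / 2) ^ 2 * (1 / T) := by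
        rw [div_pow, mul_pow, sq_sqrt hT.le]
        field_simp
    _ ≤ decay T δ x ^ 2 * (onset T x / T + 50 / (δ * endGap T δ x ^ 2)) := by
        rw [onset_of_nonneg hT hx.1]
        gcongr
        · exact half_le_decay hT hδ hx.2
        · exact le_add_of_nonneg_right (by positivity)
    _ = lossRoot T δ x ^ 2 := (lossRoot_sq hT hδ x).symm

end Decay

section Commutant

open Real
open scoped ContDiff

variable {T₁ T₂ δ x : ℝ}

/-- The rising factor of the commutant, equal to `0` before `-T₁` and to `1` after `0`. -/
noncomputable def rise (T₁ x : ℝ) : ℝ := smoothTransition (x / T₁ + 1)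

/-- The square root of the commutant `ã`. -/
noncomputable def commutantRoot (T₁ T₂ δ x : ℝ) : ℝ := √(rise T₁ x) * decay T₂ δ x

/-- The function `ã₁`, the part of `commutantRoot` before the onset of `ã₂`. -/
noncomputable def commutantRootLeft (T₁ T₂ δ x : ℝ) : ℝ :=
  commutantRoot T₁ T₂ δ x * √(1 - onset T₂ x)

/-- The function `ã₂`, the part of `commutantRoot` after its onset. -/
noncomputable def commutantRootRight (T₁ T₂ δ x : ℝ) : ℝ :=
  commutantRoot T₁ T₂ δ x * √(onset T₂ x)

/-- The function `ẽ`, the part of `ã'` where `rise` grows. -/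
noncomputable def commutantError (T₁ T₂ δ x : ℝ) : ℝ :=
  deriv (rise T₁) x * decay T₂ δ x ^ 2

lemma rise_of_le (hT₁ : 0 < T₁) (hx : x ≤ -T₁) : rise T₁ x = 0 := by
  refine smoothTransition.zero_of_nonpos ?_
  have : x / T₁ ≤ -1 := (div_le_iff₀ hT₁).2 (by linarith)
  linarith

lemma rise_of_nonneg (hT₁ : 0 < T₁) (hx : 0 ≤ x) : rise T₁ x = 1 :=
  smoothTransition.one_of_one_le (le_add_of_nonneg_left (by positivity))

lemma contDiff_rise {n : ℕ∞} : ContDiff ℝ n (rise T₁) :=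
  smoothTransition.contDiff.comp (by fun_prop)

lemma contDiff_sqrt_rise {n : ℕ∞} : ContDiff ℝ n fun x => √(rise T₁ x) :=
  contDiff_sqrt_smoothTransition.comp (by fun_prop)

lemma deriv_rise (T₁ x : ℝ) :
    deriv (rise T₁) x = deriv smoothTransition (x / T₁ + 1) / T₁ := by
  have harg : HasDerivAt (fun y => y / T₁ + 1) (1 / T₁) x :=
    ((hasDerivAt_id x).div_const T₁).add_const 1
  have hstep := (hasDerivAt_smoothTransition (x / T₁ + 1)).differentiableAt.hasDerivAt
  exact (hstep.comp x harg).deriv.trans (mul_one_div _ _)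

lemma contDiff_commutantRoot : ContDiff ℝ ∞ (commutantRoot T₁ T₂ δ) :=
  contDiff_sqrt_rise.mul contDiff_decay

lemma commutantRoot_nonneg (T₁ T₂ δ x : ℝ) : 0 ≤ commutantRoot T₁ T₂ δ x :=
  mul_nonneg (sqrt_nonneg _) (decay_nonneg T₂ δ x)

lemma commutantRoot_le_one (T₁ T₂ δ x : ℝ) : commutantRoot T₁ T₂ δ x ≤ 1 :=
  mul_le_one₀ (sqrt_le_one.2 (smoothTransition.le_one _)) (decay_nonneg T₂ δ x)
    (decay_le_one T₂ δ x)

lemma support_commutantRoot_subset (hT₁ : 0 < T₁) (hδ : 0 < δ) :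
    Function.support (commutantRoot T₁ T₂ δ) ⊆ Set.Icc (-T₁) (T₂ + δ) := by
  intro x hx
  obtain ⟨hrise, hdecay⟩ := mul_ne_zero_iff.1 hx
  constructor
  · by_contra! h
    exact hrise (by rw [rise_of_le hT₁ h.le, sqrt_zero])
  · by_contra! h
    exact hdecay (decay_eq_zero (endGap_nonpos hδ h.le))

lemma contDiff_commutantRootLeft : ContDiff ℝ ∞ (commutantRootLeft T₁ T₂ δ) := by
  unfold commutantRootLeft
  simp only [one_sub_onset]
  exact contDiff_commutantRoot.mul (contDiff_sqrt_smoothTransition.comp (by fun_prop))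

lemma contDiff_commutantRootRight : ContDiff ℝ ∞ (commutantRootRight T₁ T₂ δ) :=
  contDiff_commutantRoot.mul (contDiff_sqrt_smoothTransition.comp (by fun_prop))

lemma commutantRootLeft_nonneg (T₁ T₂ δ x : ℝ) : 0 ≤ commutantRootLeft T₁ T₂ δ x :=
  mul_nonneg (commutantRoot_nonneg T₁ T₂ δ x) (sqrt_nonneg _)

lemma commutantRootLeft_le_one (T₁ T₂ δ x : ℝ) : commutantRootLeft T₁ T₂ δ x ≤ 1 :=
  mul_le_one₀ (commutantRoot_le_one T₁ T₂ δ x) (sqrt_nonneg _)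
    (sqrt_le_one.2 (sub_le_self 1 (smoothTransition.nonneg _)))

lemma commutantRootLeft_of_nonneg (hT₂ : 0 < T₂) (hx : 0 ≤ x) :
    commutantRootLeft T₁ T₂ δ x = 0 := by
  rw [commutantRootLeft, onset_of_nonneg hT₂ hx, sub_self, sqrt_zero, mul_zero]

lemma support_commutantRootLeft_subset (hT₁ : 0 < T₁) (hT₂ : 0 < T₂) (hδ : 0 < δ) :
    Function.support (commutantRootLeft T₁ T₂ δ) ⊆ Set.Ico (-T₁) 0 := fun _ hx =>
  ⟨(support_commutantRoot_subset hT₁ hδ (left_ne_zero_of_mul hx)).1,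
    not_le.1 fun h => hx (commutantRootLeft_of_nonneg hT₂ h)⟩

lemma commutantRootRight_sq (T₁ T₂ δ x : ℝ) :
    commutantRootRight T₁ T₂ δ x ^ 2 = onset T₂ x * commutantRoot T₁ T₂ δ x ^ 2 := by
  rw [commutantRootRight, mul_pow, mul_comm, onset, sq_sqrt (smoothTransition.nonneg _)]

lemma commutantRootLeft_sq_add_commutantRootRight_sq (T₁ T₂ δ x : ℝ) :
    commutantRootLeft T₁ T₂ δ x ^ 2 + commutantRootRight T₁ T₂ δ x ^ 2 =
      commutantRoot T₁ T₂ δ x ^ 2 := by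
  have honset : onset T₂ x ≤ 1 := smoothTransition.le_one _
  rw [commutantRootRight_sq, commutantRootLeft, mul_pow, sq_sqrt (sub_nonneg.2 honset)]
  ring

lemma hasDerivAt_commutantRoot_sq (hT₂ : 0 < T₂) (hδ : 0 < δ) (x : ℝ) :
    HasDerivAt (fun y => commutantRoot T₁ T₂ δ y ^ 2)
      (-(√(rise T₁ x) * lossRoot T₂ δ x) ^ 2
        - 1 / (4 * T₂) * commutantRootRight T₁ T₂ δ x ^ 2 + commutantError T₁ T₂ δ x) x := by
  have hsqrt_sq (y : ℝ) : √(rise T₁ y) ^ 2 = rise T₁ y := sq_sqrt (smoothTransition.nonneg _)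
  have hrise : HasDerivAt (rise T₁) (deriv (rise T₁) x) x :=
    ((contDiff_rise (n := 1)).differentiable (by norm_num) x).hasDerivAt
  convert! hrise.mul (hasDerivAt_decay_sq hT₂ hδ x) using 1
  · funext y
    rw [commutantRoot, mul_pow, hsqrt_sq, Pi.mul_apply]
  · rw [commutantRootRight_sq, commutantRoot, mul_pow, mul_pow, hsqrt_sq, commutantError]
    ring

lemma contDiff_commutantError : ContDiff ℝ ∞ (commutantError T₁ T₂ δ) :=
  (contDiff_infty_iff_deriv.1 contDiff_rise).2.mul (contDiff_decay.pow 2)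

lemma commutantError_nonneg (hT₁ : 0 < T₁) (x : ℝ) : 0 ≤ commutantError T₁ T₂ δ x := by
  rw [commutantError, deriv_rise]
  exact mul_nonneg (div_nonneg (deriv_smoothTransition_nonneg _) hT₁.le) (sq_nonneg _)

lemma support_commutantError_subset (hT₁ : 0 < T₁) :
    Function.support (commutantError T₁ T₂ δ) ⊆ Set.Icc (-T₁) 0 := by
  intro x hx
  have hderiv : deriv (rise T₁) x ≠ 0 := left_ne_zero_of_mul hx
  rw [deriv_rise] at hderiv
  obtain ⟨hpos, hlt⟩ := support_deriv_smoothTransition_subset (div_ne_zero_iff.1 hderiv).1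
  have hleft : -1 < x / T₁ := by linarith
  have hright : x / T₁ < 0 := by linarith
  rw [lt_div_iff₀ hT₁] at hleft
  rw [div_lt_iff₀ hT₁] at hright
  constructor <;> linarith

lemma commutantError_le (hT₁ : 0 < T₁) (x : ℝ) : commutantError T₁ T₂ δ x ≤ 2 / T₁ := by
  rw [commutantError, deriv_rise]
  calc deriv smoothTransition (x / T₁ + 1) / T₁ * decay T₂ δ x ^ 2 ≤ 2 / T₁ * 1 := by
        gcongr
        · exact deriv_smoothTransition_le_two _
        · exact pow_le_one₀ (decay_nonneg T₂ δ x) (decay_le_one T₂ δ x)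
    _ = 2 / T₁ := mul_one _

end Commutant

/-- Existence of the commutant for the quantitative propagation estimate:
smooth functions `ã = ã₁² + ã₂²`, `b̃`, `ẽ` with `0 ≤ ã ≤ 1`,
`supp ã ⊆ [−T₁, T₂+δ₀]`, `supp ã₁ ⊆ [−T₁, 0)` (so `ã₂² = ã` on `[0, T₂+δ₀]`),
satisfying `ã' = −b̃² − (1/(4T₂))·ã₂² + ẽ`, with `b̃ ≥ 1/(2√T₂)` on `[0, T₂]`,
and `0 ≤ ẽ ≤ 2/T₁` supported in `[−T₁, 0]`. -/
theorem propagation_commutant_exists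
    (T₁ T₂ δ₀ : ℝ) (hT₁ : 0 < T₁) (hT₂ : 0 < T₂) (hδ₀ : 0 < δ₀) :
    ∃ a₁ a₂ b e : ℝ → ℝ,
      ContDiff ℝ (⊤ : ℕ∞) a₁ ∧ ContDiff ℝ (⊤ : ℕ∞) a₂ ∧ ContDiff ℝ (⊤ : ℕ∞) b ∧ ContDiff ℝ (⊤ : ℕ∞) e ∧
      (∀ x : ℝ, 0 ≤ a₁ x ^ 2 + a₂ x ^ 2 ∧ a₁ x ^ 2 + a₂ x ^ 2 ≤ 1) ∧
      Function.support (fun x : ℝ => a₁ x ^ 2 + a₂ x ^ 2) ⊆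
        Set.Icc (-T₁) (T₂ + δ₀) ∧
      (∀ x : ℝ, 0 ≤ a₁ x ∧ a₁ x ≤ 1) ∧
      Function.support a₁ ⊆ Set.Ico (-T₁) 0 ∧
      (∀ x ∈ Set.Icc (0 : ℝ) (T₂ + δ₀), a₂ x ^ 2 = a₁ x ^ 2 + a₂ x ^ 2) ∧
      (∀ x : ℝ, deriv (fun y : ℝ => a₁ y ^ 2 + a₂ y ^ 2) x =
        -(b x ^ 2) - (1 / (4 * T₂)) * a₂ x ^ 2 + e x) ∧
      (∀ x ∈ Set.Icc (0 : ℝ) T₂, 1 / (2 * Real.sqrt T₂) ≤ b x) ∧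
      (∀ x : ℝ, 0 ≤ e x) ∧
      Function.support e ⊆ Set.Icc (-T₁) 0 ∧
      (∀ x : ℝ, e x ≤ 2 / T₁) := by
  have hsq := commutantRootLeft_sq_add_commutantRootRight_sq T₁ T₂ δ₀
  refine ⟨commutantRootLeft T₁ T₂ δ₀, commutantRootRight T₁ T₂ δ₀,
    fun x => √(rise T₁ x) * lossRoot T₂ δ₀ x, commutantError T₁ T₂ δ₀,
    contDiff_commutantRootLeft, contDiff_commutantRootRight,
    contDiff_sqrt_rise.mul (contDiff_lossRoot hT₂ hδ₀), contDiff_commutantError, ?_, ?_,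
    fun x => ⟨commutantRootLeft_nonneg T₁ T₂ δ₀ x, commutantRootLeft_le_one T₁ T₂ δ₀ x⟩,
    support_commutantRootLeft_subset hT₁ hT₂ hδ₀, ?_, ?_, ?_, commutantError_nonneg hT₁,
    support_commutantError_subset hT₁, commutantError_le hT₁⟩
  · intro x
    rw [hsq]
    exact ⟨sq_nonneg _, pow_le_one₀ (commutantRoot_nonneg _ _ _ _) (commutantRoot_le_one _ _ _ _)⟩
  · simp only [hsq, Function.support_pow _ two_ne_zero]
    exact support_commutantRoot_subset hT₁ hδ₀
  · intro x hx
    rw [commutantRootLeft_of_nonneg hT₂ hx.1, zero_pow two_ne_zero, zero_add]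
  · intro x
    simp only [hsq]
    exact (hasDerivAt_commutantRoot_sq hT₂ hδ₀ x).deriv
  · intro x hx
    simp only [rise_of_nonneg hT₁ hx.1, Real.sqrt_one, one_mul]
    exact le_lossRoot hT₂ hδ₀ hx
end

section
/- Existence of the localizer ψ for logarithmically long propagation along the unstable manifold: For every ε₀ > 0 and every δ ∈ (0, ε₀/3), setting T_δ := log(6ε₀/δ), there exist infinitely differentiable functions ψ, b̃, ẽ: ℝ → ℝ such that: (i) 0 ≤ ψ ≤ 1 and the support of ψ is contained in the open interval (0, T_δ); (ii) ψ'(x) ≤ 1 for x ∈ [0, log(9/4)]; (iii) ψ'(x) < 0 and ψ(x) ≥ 1/4 for x ∈ [log(9/4), log(5ε₀/δ)]; (iv) ψ·ψ' = −b̃² + ẽ on ℝ, where b̃ ≥ 0 with support contained in [log(3/2), T_δ), the support of ẽ is contained in [0, log(9/4)), and |ẽ| ≤ 1 everywhere. -/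
/-!
Take `ψ = h g`, where `h` rises from `0` on `[p, r]` with slope at most `1` and is constant
afterwards, and `g x = exp (-a² / (T - x))` decreases to `0` at `T`. The function `exp (-1 / y)` is
chosen because `g g' = -c²` with `c` smooth up to and beyond `T`, so that
`ψ ψ' = h h' g² - (h c)²`. Splitting `(h c)²` with a cutoff `χ` from `s` to `r` puts `(χ h c)²` into
`b²` and leaves an error supported where `h` is not yet constant or `χ` is not yet `1`. A small `a`
keeps `g` close to `1`, and `c` at most `1`, away from `T`.
-/

open Set Function MeasureTheory
open scoped ContDiff unitInterval

theorem contDiff_infty_intervalIntegral {f : ℝ → ℝ} (hf : ContDiff ℝ ∞ f) (p : ℝ) :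
    ContDiff ℝ ∞ fun x => ∫ t in p..x, f t := by
  refine contDiff_infty_iff_deriv.2
    ⟨intervalIntegral.differentiable_integral_of_continuous hf.continuous, ?_⟩
  rwa [funext (hf.continuous.deriv_integral f p)]

/-- A smooth step with values in `[0, 1]`, rising with slope at most `1` between `p` and `r` from
`0` to a constant value at least `θ`; it switches the localizer on. -/
structure IsSmoothRise (p r θ : ℝ) (h : ℝ → ℝ) : Prop where
  contDiff : ContDiff ℝ ∞ h
  mem_unitInterval : ∀ x, h x ∈ I
  deriv_mem_unitInterval : ∀ x, deriv h x ∈ I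
  eq_zero : ∀ x ≤ p, h x = 0
  deriv_eq_zero : ∀ x, r ≤ x → deriv h x = 0
  le : ∀ x, r ≤ x → θ ≤ h x

theorem exists_isSmoothRise {p r θ : ℝ} (hθ : 0 < θ) (hθr : θ < r - p) (hpr : r - p ≤ 1) :
    ∃ h, IsSmoothRise p r θ h := by
  let f : ContDiffBump ((p + r) / 2) := ⟨θ / 2, (r - p) / 2, by linarith, by linarith⟩
  have support_f : support f = Ioo p r := by
    rw [f.support_eq, Real.ball_eq_Ioo]
    congr 1 <;> simp only [f] <;> ring
  have f_eq_zero {x : ℝ} (hx : x ∉ Ioo p r) : f x = 0 := by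
    rwa [← support_f, notMem_support] at hx
  have deriv_h (x : ℝ) : deriv (fun x => ∫ t in p..x, f t) x = f x :=
    f.continuous.deriv_integral f p x
  have h_mono : Monotone fun x => ∫ t in p..x, f t :=
    monotone_of_deriv_nonneg
      (intervalIntegral.differentiable_integral_of_continuous f.continuous)
      fun x => (deriv_h x).symm ▸ f.nonneg
  have h_left (x : ℝ) (hx : x ≤ p) : ∫ t in p..x, f t = 0 :=
    intervalIntegral.integral_zero_ae <| .of_forall fun t ht =>
      f_eq_zero fun htpr => ht.2.not_gt (by simpa only [max_eq_left hx] using htpr.1)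
  have h_right (x : ℝ) (hx : r ≤ x) : ∫ t in p..x, f t = ∫ t, f t :=
    intervalIntegral.integral_eq_integral_of_support_subset <|
      support_f.trans_subset fun t ht => ⟨ht.1, ht.2.le.trans hx⟩
  have le_integral : θ ≤ ∫ t, f t := by
    have := f.measure_closedBall_le_integral volume
    rwa [Real.volume_real_closedBall f.rIn_pos.le, mul_div_cancel₀ _ two_ne_zero] at this
  have integral_le : ∫ t, f t ≤ 1 := by
    have := f.integral_le_measure_closedBall volume
    rw [Real.volume_real_closedBall f.rOut_pos.le, mul_div_cancel₀ _ two_ne_zero] at this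
    exact this.trans hpr
  refine ⟨fun x => ∫ t in p..x, f t, contDiff_infty_intervalIntegral f.contDiff p,
    fun x => ⟨?_, ?_⟩, fun x => ?_, h_left, fun x hx => ?_, fun x hx => ?_⟩
  · exact (h_left _ (min_le_right x p)).symm.trans_le (h_mono (min_le_left x p))
  · exact (h_mono (le_max_left x r)).trans ((h_right _ (le_max_right x r)).trans_le integral_le)
  · exact (deriv_h x).symm ▸ ⟨f.nonneg, f.le_one⟩
  · exact (deriv_h x).trans (f_eq_zero fun hxpr => hxpr.2.not_ge hx)
  · exact le_integral.trans_eq (h_right x hx).symm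

section Decay

variable {T a x : ℝ}

/-- The function `exp (-a² / (T - x))` for `x < T`, continued by `0`; it switches the localizer
off at `T`. -/
noncomputable def smoothDecay (T a x : ℝ) : ℝ :=
  expNegInvGlue ((T - x) / a ^ 2)

/-- The nonnegative smooth square root of `-g g'` for `g = smoothDecay T a`. -/
noncomputable def smoothDecayRoot (T a x : ℝ) : ℝ :=
  a⁻¹ * (((T - x) / a ^ 2)⁻¹ * expNegInvGlue ((T - x) / a ^ 2))

theorem contDiff_smoothDecay : ContDiff ℝ ∞ (smoothDecay T a) :=
  expNegInvGlue.contDiff.comp (by fun_prop)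

theorem contDiff_smoothDecayRoot : ContDiff ℝ ∞ (smoothDecayRoot T a) := by
  have inv_mul_smooth : ContDiff ℝ ∞ fun y : ℝ => y⁻¹ * expNegInvGlue y := by
    simpa using expNegInvGlue.contDiff_polynomial_eval_inv_mul (n := ⊤) Polynomial.X
  exact contDiff_const.mul (inv_mul_smooth.comp (f := fun x => (T - x) / a ^ 2) (by fun_prop))

theorem smoothDecay_of_lt (ha : 0 < a) (hx : x < T) :
    smoothDecay T a x = Real.exp (-(a ^ 2 / (T - x))) := by
  have : 0 < (T - x) / a ^ 2 := div_pos (sub_pos.2 hx) (pow_pos ha 2)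
  rw [smoothDecay, expNegInvGlue, if_neg this.not_ge, inv_div]

theorem smoothDecay_of_le (hx : T ≤ x) : smoothDecay T a x = 0 :=
  expNegInvGlue.zero_of_nonpos (div_nonpos_of_nonpos_of_nonneg (sub_nonpos.2 hx) (sq_nonneg a))

theorem smoothDecay_mem_unitInterval : smoothDecay T a x ∈ I := by
  refine ⟨expNegInvGlue.nonneg _, ?_⟩
  unfold smoothDecay expNegInvGlue
  split_ifs with hy
  · exact zero_le_one
  · exact Real.exp_le_one_iff.2 (neg_nonpos.2 (inv_nonneg.2 (not_le.1 hy).le))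

theorem one_sub_div_le_smoothDecay (ha : 0 < a) (hx : x < T) :
    1 - a ^ 2 / (T - x) ≤ smoothDecay T a x := by
  rw [smoothDecay_of_lt ha hx]
  exact Real.one_sub_le_exp_neg _

theorem smoothDecayRoot_eq : smoothDecayRoot T a x = a / (T - x) * smoothDecay T a x := by
  rcases eq_or_ne a 0 with rfl | ha
  · simp [smoothDecayRoot]
  · rw [smoothDecayRoot, smoothDecay, inv_div]
    field_simp

theorem smoothDecayRoot_of_le (hx : T ≤ x) : smoothDecayRoot T a x = 0 := by
  rw [smoothDecayRoot_eq, smoothDecay_of_le hx, mul_zero]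

theorem smoothDecayRoot_nonneg (ha : 0 < a) : 0 ≤ smoothDecayRoot T a x := by
  rcases lt_or_ge x T with hx | hx
  · rw [smoothDecayRoot_eq]
    exact mul_nonneg (div_pos ha (sub_pos.2 hx)).le smoothDecay_mem_unitInterval.1
  · exact (smoothDecayRoot_of_le hx).ge

theorem smoothDecayRoot_mem_unitInterval (ha : 0 < a) (hx : a ≤ T - x) :
    smoothDecayRoot T a x ∈ I := by
  rw [smoothDecayRoot_eq]
  exact unitInterval.mul_mem (unitInterval.div_mem ha.le (ha.le.trans hx) hx)
    smoothDecay_mem_unitInterval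

theorem deriv_smoothDecay :
    deriv (smoothDecay T a) x = -((a / (T - x)) ^ 2 * smoothDecay T a x) := by
  have outer (y : ℝ) : HasDerivAt expNegInvGlue (y⁻¹ ^ 2 * expNegInvGlue y) y := by
    simpa using expNegInvGlue.hasDerivAt_polynomial_eval_inv_mul 1 y
  have inner : HasDerivAt (fun x => (T - x) / a ^ 2) (-1 / a ^ 2) x :=
    ((hasDerivAt_id x).const_sub T).div_const _
  refine ((outer _).comp x inner).deriv.trans ?_
  rcases eq_or_ne a 0 with rfl | ha
  · simp
  · rw [smoothDecay, inv_div]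
    field_simp

theorem deriv_smoothDecay_nonpos : deriv (smoothDecay T a) x ≤ 0 := by
  rw [deriv_smoothDecay, neg_nonpos]
  exact mul_nonneg (by positivity) smoothDecay_mem_unitInterval.1

theorem deriv_smoothDecay_neg (ha : 0 < a) (hx : x < T) : deriv (smoothDecay T a) x < 0 := by
  rw [deriv_smoothDecay, smoothDecay_of_lt ha hx, neg_lt_zero]
  have := sub_pos.2 hx
  positivity

theorem smoothDecay_mul_deriv :
    smoothDecay T a x * deriv (smoothDecay T a) x = -smoothDecayRoot T a x ^ 2 := by
  rw [deriv_smoothDecay, smoothDecayRoot_eq]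
  ring

end Decay

theorem exists_contDiff_transition {s r : ℝ} (hsr : s < r) :
    ∃ χ : ℝ → ℝ, ContDiff ℝ ∞ χ ∧ (∀ x, χ x ∈ I) ∧ (∀ x ≤ s, χ x = 0) ∧
      ∀ x, r ≤ x → χ x = 1 := by
  have hrs : 0 < r - s := sub_pos.2 hsr
  refine ⟨fun x => Real.smoothTransition ((x - s) / (r - s)),
    Real.smoothTransition.contDiff.comp (by fun_prop),
    fun x => ⟨Real.smoothTransition.nonneg _, Real.smoothTransition.le_one _⟩,
    fun x hx => Real.smoothTransition.zero_of_nonpos ?_,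
    fun x hx => Real.smoothTransition.one_of_one_le ?_⟩
  · exact div_nonpos_of_nonpos_of_nonneg (sub_nonpos.2 hx) hrs.le
  · exact (one_le_div hrs).2 (sub_le_sub_right hx s)

namespace IsSmoothRise

variable {p r θ s T a x : ℝ} {h : ℝ → ℝ}

theorem support_mul_smoothDecay_subset (hh : IsSmoothRise p r θ h) :
    support (fun x => h x * smoothDecay T a x) ⊆ Ioo p T :=
  fun x hx => ⟨lt_of_not_ge fun hxp => left_ne_zero_of_mul hx (hh.eq_zero x hxp),
    lt_of_not_ge fun hTx => right_ne_zero_of_mul hx (smoothDecay_of_le hTx)⟩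

theorem deriv_mul_smoothDecay (hh : IsSmoothRise p r θ h) :
    deriv (fun x => h x * smoothDecay T a x) x =
      deriv h x * smoothDecay T a x + h x * deriv (smoothDecay T a) x :=
  deriv_fun_mul (hh.contDiff.differentiable (by simp) x)
    (contDiff_smoothDecay.differentiable (by simp) x)

theorem deriv_mul_smoothDecay_le_one (hh : IsSmoothRise p r θ h) :
    deriv (fun x => h x * smoothDecay T a x) x ≤ 1 := by
  rw [hh.deriv_mul_smoothDecay]
  have rise_le := (unitInterval.mul_mem (hh.deriv_mem_unitInterval x)
    (smoothDecay_mem_unitInterval (T := T) (a := a) (x := x))).2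
  have decay_le := mul_nonpos_of_nonneg_of_nonpos (hh.mem_unitInterval x).1
    (deriv_smoothDecay_nonpos (T := T) (a := a) (x := x))
  linarith

theorem deriv_mul_smoothDecay_neg (hh : IsSmoothRise p r θ h) (hθ : 0 < θ) (ha : 0 < a)
    (hrx : r ≤ x) (hxT : x < T) : deriv (fun x => h x * smoothDecay T a x) x < 0 := by
  rw [hh.deriv_mul_smoothDecay, hh.deriv_eq_zero x hrx, zero_mul, zero_add]
  exact mul_neg_of_pos_of_neg (hθ.trans_le (hh.le x hrx)) (deriv_smoothDecay_neg ha hxT)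

theorem exists_mul_deriv_eq_neg_sq_add (hh : IsSmoothRise p r θ h) (hsr : s < r) (ha : 0 < a)
    (haT : a ≤ T - r) :
    ∃ b e : ℝ → ℝ, ContDiff ℝ ∞ b ∧ ContDiff ℝ ∞ e ∧
      (∀ x, h x * smoothDecay T a x * deriv (fun x => h x * smoothDecay T a x) x =
        -(b x ^ 2) + e x) ∧
      (∀ x, 0 ≤ b x) ∧ support b ⊆ Ico s T ∧ support e ⊆ Ico p r ∧ ∀ x, |e x| ≤ 1 := by
  obtain ⟨χ, χ_smooth, χ_mem, χ_zero, χ_one⟩ := exists_contDiff_transition hsr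
  let c := smoothDecayRoot T a
  let e (x : ℝ) := h x * deriv h x * smoothDecay T a x ^ 2 - (1 - χ x ^ 2) * (h x * c x) ^ 2
  have e_left (x : ℝ) (hx : x ≤ p) : e x = 0 := by simp [e, hh.eq_zero x hx]
  have e_right (x : ℝ) (hx : r ≤ x) : e x = 0 := by simp [e, hh.deriv_eq_zero x hx, χ_one x hx]
  have c_smooth : ContDiff ℝ ∞ c := contDiff_smoothDecayRoot
  have deriv_smooth : ContDiff ℝ ∞ (deriv h) := (contDiff_infty_iff_deriv.1 hh.contDiff).2
  refine ⟨fun x => χ x * (h x * c x), e, χ_smooth.mul (hh.contDiff.mul c_smooth),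
    ((hh.contDiff.mul deriv_smooth).mul (contDiff_smoothDecay.pow 2)).sub
      ((contDiff_const.sub (χ_smooth.pow 2)).mul ((hh.contDiff.mul c_smooth).pow 2)),
    fun x => ?_, fun x => ?_, fun x hx => ⟨?_, ?_⟩, fun x hx => ⟨?_, ?_⟩, fun x => ?_⟩
  · rw [hh.deriv_mul_smoothDecay]
    linear_combination h x ^ 2 * smoothDecay_mul_deriv (T := T) (a := a) (x := x)
  · exact mul_nonneg (χ_mem x).1 (mul_nonneg (hh.mem_unitInterval x).1 (smoothDecayRoot_nonneg ha))
  · exact le_of_not_gt fun hxs => left_ne_zero_of_mul hx (χ_zero x hxs.le)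
  · exact lt_of_not_ge fun hTx =>
      right_ne_zero_of_mul (right_ne_zero_of_mul hx) (smoothDecayRoot_of_le hTx)
  · exact le_of_not_gt fun hxp => hx (e_left x hxp.le)
  · exact lt_of_not_ge fun hrx => hx (e_right x hrx)
  · rcases le_total r x with hrx | hxr
    · simp [e_right x hrx]
    have sq_mem {y : ℝ} (hy : y ∈ I) : y ^ 2 ∈ I := sq y ▸ unitInterval.mul_mem hy hy
    have rise_mem := unitInterval.mul_mem
      (unitInterval.mul_mem (hh.mem_unitInterval x) (hh.deriv_mem_unitInterval x))
      (sq_mem (smoothDecay_mem_unitInterval (T := T) (a := a) (x := x)))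
    have decay_mem := unitInterval.mul_mem (Icc.one_sub_mem (sq_mem (χ_mem x)))
      (sq_mem (unitInterval.mul_mem (hh.mem_unitInterval x)
        (smoothDecayRoot_mem_unitInterval ha (by linarith : a ≤ T - x))))
    exact abs_sub_le_of_nonneg_of_le rise_mem.1 rise_mem.2 decay_mem.1 decay_mem.2

end IsSmoothRise

theorem exists_forall_le_smoothDecay {A r T ρ : ℝ} (hAT : A < T) (hrT : r < T) (hρ : ρ < 1) :
    ∃ a, 0 < a ∧ a ≤ T - r ∧ ∀ x ≤ A, ρ ≤ smoothDecay T a x := by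
  have hpos : 0 < (1 - ρ) * (T - A) := mul_pos (sub_pos.2 hρ) (sub_pos.2 hAT)
  set a := min (T - r) √((1 - ρ) * (T - A))
  have ha : 0 < a := lt_min (sub_pos.2 hrT) (Real.sqrt_pos.2 hpos)
  have ha_sq : a ^ 2 ≤ (1 - ρ) * (T - A) := (Real.le_sqrt ha.le hpos.le).1 (min_le_right _ _)
  refine ⟨a, ha, min_le_left _ _, fun x hx => ?_⟩
  have hxT : x < T := hx.trans_lt hAT
  calc ρ = 1 - (1 - ρ) := by ring
    _ ≤ 1 - a ^ 2 / (T - x) := by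
      gcongr
      rw [div_le_iff₀ (sub_pos.2 hxT)]
      exact ha_sq.trans (mul_le_mul_of_nonneg_left (by linarith) (by linarith))
    _ ≤ smoothDecay T a x := one_sub_div_le_smoothDecay ha hxT

theorem log_localizer_exists_general {s r A T θ : ℝ} (hsr : s < r) (hrT : r < T) (hAT : A < T)
    (hθ : 0 ≤ θ) (hθr : θ < r) (hθ1 : θ < 1) :
    ∃ ψ b e : ℝ → ℝ,
      ContDiff ℝ ∞ ψ ∧ ContDiff ℝ ∞ b ∧ ContDiff ℝ ∞ e ∧
      (∀ x, 0 ≤ ψ x ∧ ψ x ≤ 1) ∧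
      support ψ ⊆ Ioo 0 T ∧
      (∀ x, deriv ψ x ≤ 1) ∧
      (∀ x ∈ Icc r A, deriv ψ x < 0 ∧ θ ≤ ψ x) ∧
      (∀ x, ψ x * deriv ψ x = -(b x ^ 2) + e x) ∧
      (∀ x, 0 ≤ b x) ∧
      support b ⊆ Ico s T ∧
      support e ⊆ Ico 0 r ∧
      (∀ x, |e x| ≤ 1) := by
  obtain ⟨p, hp, hθp, hpr⟩ : ∃ p, 0 ≤ p ∧ θ < r - p ∧ r - p ≤ 1 :=
    ⟨max 0 (r - 1), le_max_left _ _, lt_sub_comm.1 (max_lt (by linarith) (by linarith)),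
      sub_le_comm.1 (le_max_right _ _)⟩
  obtain ⟨κ, hθκ, hκ⟩ := exists_between hθp
  have hκ_pos : 0 < κ := hθ.trans_lt hθκ
  obtain ⟨h, hh⟩ := exists_isSmoothRise hκ_pos hκ hpr
  obtain ⟨a, ha, haT, hg⟩ := exists_forall_le_smoothDecay hAT hrT ((div_lt_one hκ_pos).2 hθκ)
  obtain ⟨b, e, b_smooth, e_smooth, mul_deriv, b_nonneg, support_b, support_e, abs_e⟩ :=
    hh.exists_mul_deriv_eq_neg_sq_add hsr ha haT
  refine ⟨fun x => h x * smoothDecay T a x, b, e, hh.contDiff.mul contDiff_smoothDecay, b_smooth,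
    e_smooth, fun x => unitInterval.mul_mem (hh.mem_unitInterval x) smoothDecay_mem_unitInterval,
    hh.support_mul_smoothDecay_subset.trans (Ioo_subset_Ioo_left hp),
    fun x => hh.deriv_mul_smoothDecay_le_one,
    fun x hx => ⟨hh.deriv_mul_smoothDecay_neg hκ_pos ha hx.1 (hx.2.trans_lt hAT), ?_⟩,
    mul_deriv, b_nonneg, support_b, support_e.trans (Ico_subset_Ico_left hp), abs_e⟩
  calc θ = κ * (θ / κ) := (mul_div_cancel₀ θ hκ_pos.ne').symm
    _ ≤ h x * smoothDecay T a x := by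
      gcongr
      · exact (hh.mem_unitInterval x).1
      · exact hh.le x hx.1
      · exact hg x hx.2

/-- Existence of the localizer `ψ` for logarithmically long propagation along
the unstable manifold: for `0 < δ < ε₀/3` and `T_δ = log(6ε₀/δ)` there are
smooth `ψ, b̃, ẽ` with `0 ≤ ψ ≤ 1`, `supp ψ ⊆ (0, T_δ)`, `ψ' ≤ 1` on
`[0, log(9/4)]`, `ψ' < 0` and `ψ ≥ 1/4` on `[log(9/4), log(5ε₀/δ)]`, and
`ψψ' = −b̃² + ẽ` with `b̃ ≥ 0` supported in `[log(3/2), T_δ)`, `ẽ` supported in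
`[0, log(9/4))`, `|ẽ| ≤ 1`. -/
theorem log_localizer_exists
    (ε₀ δ : ℝ) (hε₀ : 0 < ε₀) (hδ : 0 < δ) (hδε : δ < ε₀ / 3) :
    ∃ ψ b e : ℝ → ℝ,
      ContDiff ℝ (⊤ : ℕ∞) ψ ∧ ContDiff ℝ (⊤ : ℕ∞) b ∧ ContDiff ℝ (⊤ : ℕ∞) e ∧
      (∀ x : ℝ, 0 ≤ ψ x ∧ ψ x ≤ 1) ∧
      Function.support ψ ⊆ Set.Ioo 0 (Real.log (6 * ε₀ / δ)) ∧
      (∀ x ∈ Set.Icc (0 : ℝ) (Real.log (9 / 4)), deriv ψ x ≤ 1) ∧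
      (∀ x ∈ Set.Icc (Real.log (9 / 4)) (Real.log (5 * ε₀ / δ)),
        deriv ψ x < 0 ∧ 1 / 4 ≤ ψ x) ∧
      (∀ x : ℝ, ψ x * deriv ψ x = -(b x ^ 2) + e x) ∧
      (∀ x : ℝ, 0 ≤ b x) ∧
      Function.support b ⊆ Set.Ico (Real.log (3 / 2)) (Real.log (6 * ε₀ / δ)) ∧
      Function.support e ⊆ Set.Ico 0 (Real.log (9 / 4)) ∧
      (∀ x : ℝ, |e x| ≤ 1) := by
  have rise_before_end : Real.log (9 / 4) < Real.log (6 * ε₀ / δ) :=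
    Real.log_lt_log (by norm_num) (by rw [lt_div_iff₀ hδ]; linarith)
  have descent_before_end : Real.log (5 * ε₀ / δ) < Real.log (6 * ε₀ / δ) :=
    Real.log_lt_log (by positivity) (by gcongr; norm_num)
  have quarter_lt_log : (1 / 4 : ℝ) < Real.log (9 / 4) :=
    lt_of_lt_of_le (by norm_num) (Real.one_sub_inv_le_log_of_pos (by norm_num))
  obtain ⟨ψ, b, e, ψ_smooth, b_smooth, e_smooth, ψ_mem, support_ψ, deriv_le, rest⟩ :=
    log_localizer_exists_general (s := Real.log (3 / 2))
      (Real.log_lt_log (by norm_num) (by norm_num)) rise_before_end descent_before_end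
      (by norm_num) quarter_lt_log (by norm_num)
  exact ⟨ψ, b, e, ψ_smooth, b_smooth, e_smooth, ψ_mem, support_ψ, fun x _ => deriv_le x, rest⟩
end
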